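/- arXiv:1605.05069 — 6 statements merged into one kernel-verified Lean document; each statement's English description precedes it below -/
import Mathlib

section
/- Let (X₁, X₂) be distributed according to the uniform probability measure P on the triangle Ω₁ = {(x₁, x₂) ∈ [0,1]² : x₁ + x₂ ≥ 1}, and let f(x₁, x₂) = x₁x₂. Then the total effect Sobol' index of x₂, namely S^T_{x₂} = E_P[ Var(f(X₁, X₂) | X₁) ] / Var_P(f), equals 20/27; equivalently S^T_{x₂} = 1 − S_{x₁} with S_{x₁} = 7/27. -/
/-!
Given `X₁ = x`, the variable `X₂` is uniform on `[1 - x, 1]`, so `E[f | X₁] = X₁ - X₁² / 2`.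
This is checked against the defining property of conditional expectation
(`condExp_triangleMeasure`), with Fubini on the triangle in the form
`∫ h dP = 2 ∫₀¹ ∫_{1-x}^1 h(x, y) dy dx` (`integral_triangleMeasure`). The remaining quantities are
iterated integrals of polynomials: `Var f = 3/80`, `Var E[f | X₁] = 7/720` and
`E[(f - E[f | X₁])²] = 1/36`.
-/

open MeasureTheory ProbabilityTheory Set

/-- The triangle `{(x, y) ∈ [0,1]² : x + y ≥ 1}`. -/
def triangle : Set (ℝ × ℝ) :=
  {q : ℝ × ℝ | q.1 ∈ Icc (0 : ℝ) 1 ∧ q.2 ∈ Icc (0 : ℝ) 1 ∧ 1 ≤ q.1 + q.2}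

/-- The uniform probability measure on the triangle: density `2`, as the area is `1/2`. -/
noncomputable def triangleMeasure : Measure (ℝ × ℝ) :=
  (2 : ENNReal) • volume.restrict triangle

lemma isCompact_triangle : IsCompact triangle := by
  have h : triangle = (Icc (0 : ℝ) 1 ×ˢ Icc (0 : ℝ) 1) ∩ {q : ℝ × ℝ | 1 ≤ q.1 + q.2} := by
    ext q
    simp only [triangle, mem_ofPred_eq, mem_inter_iff, mem_prod, and_assoc]
  rw [h]
  exact (isCompact_Icc.prod isCompact_Icc).inter_right
    (isClosed_le continuous_const (by fun_prop))

lemma integrable_triangleMeasure {h : ℝ × ℝ → ℝ} (hh : Continuous h) :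
    Integrable h triangleMeasure :=
  (hh.continuousOn.integrableOn_compact isCompact_triangle).smul_measure (by simp)

/-- Fubini's theorem on the triangle. -/
lemma integral_triangleMeasure {h : ℝ × ℝ → ℝ} (hh : Integrable h triangleMeasure) :
    ∫ q, h q ∂triangleMeasure = 2 * ∫ x in (0 : ℝ)..1, ∫ y in (1 - x)..1, h (x, y) := by
  have hm : MeasurableSet triangle := isCompact_triangle.measurableSet
  have hh' : IntegrableOn h triangle :=
    (integrable_smul_measure (by simp) (by simp)).1 hh
  have hslice : ∀ x : ℝ, ∫ y, triangle.indicator h (x, y) =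
      (Icc (0 : ℝ) 1).indicator (fun x => ∫ y in (1 - x)..1, h (x, y)) x := by
    intro x
    by_cases hx : x ∈ Icc (0 : ℝ) 1
    · rw [indicator_of_mem hx, intervalIntegral.integral_of_le (by linarith [hx.1]),
        ← integral_Icc_eq_integral_Ioc, ← integral_indicator measurableSet_Icc]
      congr 1
      ext y
      by_cases hy : y ∈ Icc (1 - x) 1
      · rw [indicator_of_mem hy, indicator_of_mem]
        exact ⟨hx, ⟨by linarith [hy.1, hx.2], hy.2⟩, by linarith [hy.1]⟩
      · rw [indicator_of_notMem hy, indicator_of_notMem]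
        exact fun hq => hy ⟨by linarith [hq.2.2], hq.2.1.2⟩
    · rw [indicator_of_notMem hx]
      have : ∀ y, triangle.indicator h (x, y) = 0 := fun y =>
        indicator_of_notMem (fun hq => hx hq.1) _
      simp [this]
  rw [triangleMeasure, integral_smul_measure, ← integral_indicator hm, Measure.volume_eq_prod,
    integral_prod _ ((integrable_indicator_iff hm).2 hh')]
  simp only [hslice]
  rw [integral_indicator measurableSet_Icc, integral_Icc_eq_integral_Ioc,
    intervalIntegral.integral_of_le zero_le_one]
  simp

instance : IsFiniteMeasure triangleMeasure :=
  ⟨((integrable_const_iff_isFiniteMeasure one_ne_zero).1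
    (integrable_triangleMeasure (continuous_const (y := (1 : ℝ))))).1⟩

instance : IsProbabilityMeasure triangleMeasure := by
  have h := integral_triangleMeasure (integrable_const (1 : ℝ))
  refine ⟨(ENNReal.toReal_eq_one_iff _).1 ?_⟩
  simpa [Measure.real] using h

lemma memLp_two_triangleMeasure {h : ℝ × ℝ → ℝ} (hh : Continuous h) :
    MemLp h 2 triangleMeasure :=
  (memLp_two_iff_integrable_sq hh.aestronglyMeasurable).2 (integrable_triangleMeasure (by fun_prop))

/-- `E[X₁ X₂ | X₁] = X₁ (1 - X₁ / 2)`, as `X₂` has conditional mean `1 - X₁ / 2`. -/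
lemma condExp_triangleMeasure :
    triangleMeasure[fun q : ℝ × ℝ => q.1 * q.2 | MeasurableSpace.comap Prod.fst inferInstance]
      =ᵐ[triangleMeasure] fun q => q.1 - q.1 ^ 2 / 2 := by
  have hm : MeasurableSpace.comap (Prod.fst : ℝ × ℝ → ℝ) inferInstance
      ≤ (inferInstance : MeasurableSpace (ℝ × ℝ)) := measurable_fst.comap_le
  have hf := integrable_triangleMeasure (h := fun q => q.1 * q.2) (by fun_prop)
  have hg := integrable_triangleMeasure (h := fun q => q.1 - q.1 ^ 2 / 2) (by fun_prop)
  symm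
  refine ae_eq_condExp_of_forall_setIntegral_eq hm hf (fun _ _ _ => hg.integrableOn) ?_ ?_
  · rintro _ ⟨s, hs, rfl⟩ -
    have hs' : MeasurableSet (Prod.fst ⁻¹' s : Set (ℝ × ℝ)) := measurable_fst hs
    rw [← integral_indicator hs', ← integral_indicator hs',
      integral_triangleMeasure (hg.indicator hs'), integral_triangleMeasure (hf.indicator hs')]
    congr 2
    ext x
    by_cases hx : x ∈ s
    · simp only [indicator, mem_preimage, hx, if_true]
      rw [intervalIntegral.integral_const, intervalIntegral.integral_const_mul, integral_id]
      simp only [smul_eq_mul]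
      ring
    · simp [indicator, hx]
  · have h1 : Measurable[MeasurableSpace.comap (Prod.fst : ℝ × ℝ → ℝ) inferInstance]
        (Prod.fst : ℝ × ℝ → ℝ) := comap_measurable _
    have h2 : Measurable (fun x : ℝ => x - x ^ 2 / 2) := by fun_prop
    exact (h2.comp h1).stronglyMeasurable.aestronglyMeasurable

lemma integral_quadratic (p q r a b : ℝ) :
    ∫ y in a..b, (p + q * y + r * y ^ 2) =
      p * (b - a) + q * (b ^ 2 - a ^ 2) / 2 + r * (b ^ 3 - a ^ 3) / 3 := by
  have hd : ∀ y ∈ uIcc a b, HasDerivAt (fun y : ℝ => p * y + q / 2 * y ^ 2 + r / 3 * y ^ 3)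
      (p + q * y + r * y ^ 2) y := by
    intro y _
    have h := (((hasDerivAt_id y).const_mul p).add ((hasDerivAt_pow 2 y).const_mul (q / 2))).add
      ((hasDerivAt_pow 3 y).const_mul (r / 3))
    refine h.congr_deriv ?_
    norm_num
    ring
  rw [intervalIntegral.integral_eq_sub_of_hasDerivAt hd
    (Continuous.intervalIntegrable (by fun_prop) _ _)]
  ring

lemma integral_quintic (a b c d : ℝ) :
    ∫ x in (0 : ℝ)..1, (a * x ^ 2 + b * x ^ 3 + c * x ^ 4 + d * x ^ 5) =
      a / 3 + b / 4 + c / 5 + d / 6 := by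
  have hd : ∀ x ∈ uIcc (0 : ℝ) 1, HasDerivAt
      (fun x : ℝ => a / 3 * x ^ 3 + b / 4 * x ^ 4 + c / 5 * x ^ 5 + d / 6 * x ^ 6)
      (a * x ^ 2 + b * x ^ 3 + c * x ^ 4 + d * x ^ 5) x := by
    intro x _
    have h := ((((hasDerivAt_pow 3 x).const_mul (a / 3)).add
      ((hasDerivAt_pow 4 x).const_mul (b / 4))).add
      ((hasDerivAt_pow 5 x).const_mul (c / 5))).add ((hasDerivAt_pow 6 x).const_mul (d / 6))
    refine h.congr_deriv ?_
    norm_num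
    ring
  rw [intervalIntegral.integral_eq_sub_of_hasDerivAt hd
    (Continuous.intervalIntegrable (by fun_prop) _ _)]
  ring

/-- Integration against `P` of a function `p(x) + q(x) y + r(x) y²` whose integral over the slice
`1 - x ≤ y ≤ 1` is the polynomial `a x² + b x³ + c x⁴ + d x⁵`. -/
lemma integral_triangleMeasure_poly {h : ℝ × ℝ → ℝ} (hc : Continuous h) (p q r : ℝ → ℝ)
    (a b c d : ℝ) (hh : ∀ x y, h (x, y) = p x + q x * y + r x * y ^ 2)
    (hx : ∀ x : ℝ, p x * (1 - (1 - x)) + q x * (1 ^ 2 - (1 - x) ^ 2) / 2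
      + r x * (1 ^ 3 - (1 - x) ^ 3) / 3 = a * x ^ 2 + b * x ^ 3 + c * x ^ 4 + d * x ^ 5) :
    ∫ z, h z ∂triangleMeasure = 2 * (a / 3 + b / 4 + c / 5 + d / 6) := by
  rw [integral_triangleMeasure (integrable_triangleMeasure hc)]
  simp only [hh, integral_quadratic, hx, integral_quintic]

lemma variance_product : variance (fun q : ℝ × ℝ => q.1 * q.2) triangleMeasure = 3 / 80 := by
  rw [variance_eq_sub (memLp_two_triangleMeasure (by fun_prop))]
  simp only [Pi.pow_apply]
  rw [integral_triangleMeasure_poly (by fun_prop) (fun _ => 0) (fun _ => 0) (fun x => x ^ 2)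
      0 1 (-1) (1 / 3) (fun x y => by ring) (fun x => by ring),
    integral_triangleMeasure_poly (by fun_prop) (fun _ => 0) (fun x => x) (fun _ => 0)
      1 (-1 / 2) 0 0 (fun x y => by ring) (fun x => by ring)]
  norm_num

lemma variance_conditionalMean :
    variance (fun q : ℝ × ℝ => q.1 - q.1 ^ 2 / 2) triangleMeasure = 7 / 720 := by
  rw [variance_eq_sub (memLp_two_triangleMeasure (by fun_prop))]
  simp only [Pi.pow_apply]
  rw [integral_triangleMeasure_poly (by fun_prop) (fun x => (x - x ^ 2 / 2) ^ 2) (fun _ => 0)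
      (fun _ => 0) 0 1 (-1) (1 / 4) (fun x y => by ring) (fun x => by ring),
    integral_triangleMeasure_poly (by fun_prop) (fun x => x - x ^ 2 / 2) (fun _ => 0)
      (fun _ => 0) 1 (-1 / 2) 0 0 (fun x y => by ring) (fun x => by ring)]
  norm_num

lemma integral_residual_sq :
    ∫ q : ℝ × ℝ, (q.1 * q.2 - (q.1 - q.1 ^ 2 / 2)) ^ 2 ∂triangleMeasure = 1 / 36 := by
  rw [integral_triangleMeasure_poly (by fun_prop) (fun x => (x - x ^ 2 / 2) ^ 2)
    (fun x => -2 * x * (x - x ^ 2 / 2)) (fun x => x ^ 2) 0 0 0 (1 / 12)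
    (fun x y => by ring) (fun x => by ring)]
  norm_num

/-- For `f(x₁,x₂) = x₁x₂` with `(X₁, X₂)` uniformly distributed on the triangle
`Ω₁ = {(x₁,x₂) ∈ [0,1]² : x₁ + x₂ ≥ 1}`, the total effect Sobol' index of `x₂`,
`S^T_{x₂} = E[Var(f | X₁)] / Var(f) = E[(f − E[f|X₁])²] / Var(f)`, equals `20/27`,
which equals `1 − S_{x₁}` with `S_{x₁} = 7/27`. -/
theorem total_effect_x2_product_function_upper_triangle
    (Ω₁ : Set (ℝ × ℝ))
    (hΩ₁ : Ω₁ = {q : ℝ × ℝ | q.1 ∈ Icc (0 : ℝ) 1 ∧ q.2 ∈ Icc (0 : ℝ) 1 ∧ 1 ≤ q.1 + q.2})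
    (P : Measure (ℝ × ℝ)) (hP : P = (2 : ENNReal) • volume.restrict Ω₁)
    (f : ℝ × ℝ → ℝ) (hf : f = fun q => q.1 * q.2) :
    (∫ q, (f q - (P[f | MeasurableSpace.comap Prod.fst inferInstance]) q) ^ 2 ∂P)
        / variance f P = 20 / 27
      ∧ (20 / 27 : ℝ)
          = 1 - variance (P[f | MeasurableSpace.comap Prod.fst inferInstance]) P / variance f P
      ∧ variance (P[f | MeasurableSpace.comap Prod.fst inferInstance]) P / variance f P
          = 7 / 27 := by
  have hΩ : Ω₁ = triangle := hΩ₁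
  subst hΩ
  have hPt : P = triangleMeasure := hP
  subst hPt
  subst hf
  have hres : ∫ q, (q.1 * q.2 - (triangleMeasure[fun q : ℝ × ℝ => q.1 * q.2 |
      MeasurableSpace.comap Prod.fst inferInstance]) q) ^ 2 ∂triangleMeasure = 1 / 36 := by
    rw [← integral_residual_sq]
    refine integral_congr_ae ?_
    filter_upwards [condExp_triangleMeasure] with q hq
    rw [hq]
  rw [variance_congr condExp_triangleMeasure, variance_product, variance_conditionalMean]
  refine ⟨?_, by norm_num, by norm_num⟩
  simp only [hres]
  norm_num
end

section
/- Let P be the uniform probability measure on the lower triangle Ω₂ = {(x₁, x₂) ∈ [0,1]² : x₁ + x₂ ≤ 1} (so P has density 2 with respect to Lebesgue measure on Ω₂), and let f(x₁, x₂) = |4x₁ − 2| · (|4x₂ − 2| + 1)/2. Then the total variance of f is D = Var_P(f) = 4/9. -/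
/-!
The function `f` is invariant under the point reflection `q ↦ (1, 1) - q` of the unit square, which
swaps the lower triangle with the upper one. As the diagonal is a null set, the average of any
reflection-invariant function over the triangle equals its average over the whole square
(`two_mul_setIntegral_triangle`). On the square `f` is a product of functions of one variable, so
Fubini gives `E f = 1` and `E f² = (4/3) · (13/12) = 13/9`, and the variance is `13/9 - 1 = 4/9`.
-/

open MeasureTheory ProbabilityTheory Set

/-- The average over the lower triangle of a function invariant under `q ↦ (1, 1) - q` is its
average over the unit square. -/
lemma two_mul_setIntegral_triangle (g : ℝ × ℝ → ℝ) (hg : Continuous g)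
    (hsymm : ∀ q, g ((1, 1) - q) = g q) :
    2 * ∫ q in {q : ℝ × ℝ | q.1 ∈ Icc (0 : ℝ) 1 ∧ q.2 ∈ Icc (0 : ℝ) 1 ∧ q.1 + q.2 ≤ 1}, g q
      = ∫ q in Icc (0 : ℝ) 1 ×ˢ Icc (0 : ℝ) 1, g q := by
  set T : Set (ℝ × ℝ) := {q | q.1 ∈ Icc (0 : ℝ) 1 ∧ q.2 ∈ Icc (0 : ℝ) 1 ∧ q.1 + q.2 ≤ 1} with hT
  set U : Set (ℝ × ℝ) := (fun q => (1, 1) - q) ⁻¹' T with hU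
  have hTm : MeasurableSet T := by
    refine (measurable_fst measurableSet_Icc).inter ((measurable_snd measurableSet_Icc).inter ?_)
    exact measurableSet_le (f := fun q : ℝ × ℝ => q.1 + q.2) (g := fun _ => 1) (by fun_prop)
      (by fun_prop)
  have hUm : MeasurableSet U := by
    have : Measurable (fun q : ℝ × ℝ => ((1, 1) : ℝ × ℝ) - q) := by fun_prop
    exact this hTm
  have hunion : T ∪ U = Icc (0 : ℝ) 1 ×ˢ Icc (0 : ℝ) 1 := by
    ext ⟨x, y⟩
    simp only [hT, hU, mem_union, mem_preimage, mem_ofPred_eq, mem_prod, mem_Icc, Prod.fst_sub,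
      Prod.snd_sub]
    grind
  have hdisj : AEDisjoint volume T U := by
    have hdiag : (volume : Measure (ℝ × ℝ)) {q | q.1 + q.2 = 1} = 0 := by
      have hm : MeasurableSet {q : ℝ × ℝ | q.1 + q.2 = 1} :=
        measurableSet_eq_fun (by fun_prop) (by fun_prop)
      rw [Measure.volume_eq_prod, Measure.measure_prod_null hm]
      refine Filter.Eventually.of_forall fun x => ?_
      refine Set.Subsingleton.measure_zero (fun y hy z hz => ?_) _
      simp only [mem_preimage, mem_ofPred_eq] at hy hz
      linarith
    refine measure_mono_null ?_ hdiag
    rintro ⟨x, y⟩ ⟨h1, h2⟩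
    simp only [hT, hU, mem_preimage, mem_ofPred_eq, Prod.fst_sub, Prod.snd_sub] at h1 h2 ⊢
    linarith [h1.2.2, h2.2.2]
  have hint : IntegrableOn g (T ∪ U) := by
    rw [hunion]
    exact hg.continuousOn.integrableOn_compact (isCompact_Icc.prod isCompact_Icc)
  have hrefl : ∫ q in U, g q = ∫ q in T, g q := by
    rw [← (Measure.measurePreserving_sub_left volume ((1, 1) : ℝ × ℝ)).setIntegral_preimage_emb
      (MeasurableEquiv.subLeft ((1, 1) : ℝ × ℝ)).measurableEmbedding g T]
    simp only [hsymm, hU]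
  rw [← hunion, setIntegral_union₀ hdisj hUm.nullMeasurableSet
    (hint.mono_set subset_union_left) (hint.mono_set subset_union_right), hrefl]
  ring

lemma integral_abs_four_mul_sub_two : ∫ x in Icc (0 : ℝ) 1, |4 * x - 2| = 1 := by
  have hi : ∀ a b : ℝ, IntervalIntegrable (fun x : ℝ => |4 * x - 2|) volume a b := fun a b =>
    Continuous.intervalIntegrable (by fun_prop) a b
  have h1 : ∫ x in (0 : ℝ)..(1 / 2), |4 * x - 2| = ∫ x in (0 : ℝ)..(1 / 2), (2 - 4 * x) := by
    refine intervalIntegral.integral_congr fun x hx => ?_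
    rw [uIcc_of_le (by norm_num)] at hx
    have := hx.2
    show |4 * x - 2| = 2 - 4 * x
    rw [abs_of_nonpos (by linarith)]
    ring
  have h2 : ∫ x in (1 / 2 : ℝ)..1, |4 * x - 2| = ∫ x in (1 / 2 : ℝ)..1, (4 * x - 2) := by
    refine intervalIntegral.integral_congr fun x hx => ?_
    rw [uIcc_of_le (by norm_num)] at hx
    have := hx.1
    exact abs_of_nonneg (by linarith)
  rw [integral_Icc_eq_integral_Ioc, ← intervalIntegral.integral_of_le zero_le_one,
    ← intervalIntegral.integral_add_adjacent_intervals (hi 0 (1 / 2)) (hi (1 / 2) 1), h1, h2,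
    intervalIntegral.integral_sub (by simp) (Continuous.intervalIntegrable (by fun_prop) _ _),
    intervalIntegral.integral_sub (Continuous.intervalIntegrable (by fun_prop) _ _) (by simp)]
  have h3 : ∀ a b : ℝ, ∫ x in a..b, 4 * x = 4 * ((b ^ 2 - a ^ 2) / 2) := fun a b => by
    rw [← integral_id]
    exact intervalIntegral.integral_const_mul 4 (fun x => x)
  simp only [h3, intervalIntegral.integral_const, smul_eq_mul]
  norm_num

lemma integral_abs_four_mul_sub_two_sq : ∫ x in Icc (0 : ℝ) 1, |4 * x - 2| ^ 2 = 4 / 3 := by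
  have h : ∀ x : ℝ, |4 * x - 2| ^ 2 = 16 * x ^ 2 - 16 * x + 4 := fun x => by
    rw [sq_abs]
    ring
  simp only [h]
  rw [integral_Icc_eq_integral_Ioc, ← intervalIntegral.integral_of_le zero_le_one,
    intervalIntegral.integral_add (Continuous.intervalIntegrable (by fun_prop) _ _) (by simp),
    intervalIntegral.integral_sub (Continuous.intervalIntegrable (by fun_prop) _ _)
      (Continuous.intervalIntegrable (by fun_prop) _ _)]
  have h1 : ∫ x in (0 : ℝ)..1, 16 * x = 16 * ((1 ^ 2 - 0 ^ 2) / 2) := by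
    rw [← integral_id]
    exact intervalIntegral.integral_const_mul 16 (fun x => x)
  simp only [h1, intervalIntegral.integral_const_mul, integral_pow,
    intervalIntegral.integral_const, smul_eq_mul]
  norm_num

lemma integral_abs_add_one_div_two :
    ∫ x in Icc (0 : ℝ) 1, (|4 * x - 2| + 1) / 2 = 1 := by
  have hi : IntegrableOn (fun x : ℝ => |4 * x - 2|) (Icc 0 1) :=
    Continuous.integrableOn_Icc (by fun_prop)
  rw [integral_div, integral_add hi (by simp), integral_abs_four_mul_sub_two]
  simp

lemma integral_abs_add_one_div_two_sq :
    ∫ x in Icc (0 : ℝ) 1, ((|4 * x - 2| + 1) / 2) ^ 2 = 13 / 12 := by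
  have hi : IntegrableOn (fun x : ℝ => 1 / 4 * |4 * x - 2| ^ 2) (Icc 0 1) :=
    Continuous.integrableOn_Icc (by fun_prop)
  have hj : IntegrableOn (fun x : ℝ => 1 / 2 * |4 * x - 2|) (Icc 0 1) :=
    Continuous.integrableOn_Icc (by fun_prop)
  have h : ∀ x : ℝ, ((|4 * x - 2| + 1) / 2) ^ 2
      = 1 / 4 * |4 * x - 2| ^ 2 + 1 / 2 * |4 * x - 2| + 1 / 4 := fun x => by ring
  simp only [h]
  have hij : IntegrableOn (fun x : ℝ => 1 / 4 * |4 * x - 2| ^ 2 + 1 / 2 * |4 * x - 2|) (Icc 0 1) :=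
    hi.add hj
  rw [integral_add hij (by simp), integral_add hi hj, integral_const_mul,
    integral_const_mul, integral_abs_four_mul_sub_two, integral_abs_four_mul_sub_two_sq]
  simp
  norm_num

/-- For the uniform probability measure on the lower triangle
`Ω₂ = {(x₁,x₂) ∈ [0,1]² : x₁ + x₂ ≤ 1}` (density 2 on `Ω₂`), the total variance of the 2D
g-function `f(x₁,x₂) = |4x₁−2|·(|4x₂−2|+1)/2` is `4/9`. -/
theorem variance_g_function_lower_triangle
    (Ω₂ : Set (ℝ × ℝ))
    (hΩ₂ : Ω₂ = {q : ℝ × ℝ | q.1 ∈ Icc (0 : ℝ) 1 ∧ q.2 ∈ Icc (0 : ℝ) 1 ∧ q.1 + q.2 ≤ 1})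
    (P : Measure (ℝ × ℝ)) (hP : P = (2 : ENNReal) • volume.restrict Ω₂)
    (f : ℝ × ℝ → ℝ) (hf : f = fun q => |4 * q.1 - 2| * (|4 * q.2 - 2| + 1) / 2) :
    variance f P = 4 / 9 := by
  have hfc : Continuous f := by
    rw [hf]
    fun_prop
  have hsymm : ∀ q, f ((1, 1) - q) = f q := by
    have habs : ∀ t : ℝ, |4 * (1 - t) - 2| = |4 * t - 2| := fun t => by
      rw [← abs_neg]
      congr 1
      ring
    intro q
    simp only [hf, Prod.fst_sub, Prod.snd_sub, habs]
  have hP_integral : ∀ g : ℝ × ℝ → ℝ, Continuous g → (∀ q, g ((1, 1) - q) = g q) →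
      ∫ q, g q ∂P = ∫ q in Icc (0 : ℝ) 1 ×ˢ Icc (0 : ℝ) 1, g q := fun g hg hs => by
    rw [← two_mul_setIntegral_triangle g hg hs, hP, hΩ₂, integral_smul_measure]
    simp
  have hmean : ∫ q in Icc (0 : ℝ) 1 ×ˢ Icc (0 : ℝ) 1, f q = 1 := by
    have := setIntegral_prod_mul (μ := volume) (ν := volume) (fun x : ℝ => |4 * x - 2|)
      (fun y : ℝ => (|4 * y - 2| + 1) / 2) (Icc 0 1) (Icc 0 1)
    rw [integral_abs_four_mul_sub_two, integral_abs_add_one_div_two,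
      ← Measure.volume_eq_prod] at this
    simpa only [hf, mul_div_assoc, mul_one] using this
  have hsq : ∫ q in Icc (0 : ℝ) 1 ×ˢ Icc (0 : ℝ) 1, f q ^ 2 = 13 / 9 := by
    have := setIntegral_prod_mul (μ := volume) (ν := volume) (fun x : ℝ => |4 * x - 2| ^ 2)
      (fun y : ℝ => ((|4 * y - 2| + 1) / 2) ^ 2) (Icc 0 1) (Icc 0 1)
    rw [integral_abs_four_mul_sub_two_sq, integral_abs_add_one_div_two_sq,
      ← Measure.volume_eq_prod] at this
    simp only [hf, mul_div_assoc, mul_pow]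
    rw [this]
    norm_num
  have hint : ∀ g : ℝ × ℝ → ℝ, Continuous g →
      IntegrableOn g (Icc (0 : ℝ) 1 ×ˢ Icc (0 : ℝ) 1) := fun g hg =>
    hg.continuousOn.integrableOn_compact (isCompact_Icc.prod isCompact_Icc)
  have hone : ∫ _q in Icc (0 : ℝ) 1 ×ˢ Icc (0 : ℝ) 1, (1 : ℝ) = 1 := by
    rw [setIntegral_const, measureReal_def, Measure.volume_eq_prod, Measure.prod_prod]
    simp
  have hexp : ∀ q, (f q - 1) ^ 2 = f q ^ 2 - 2 * f q + 1 := fun q => by ring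
  rw [variance_eq_integral hfc.measurable.aemeasurable, hP_integral f hfc hsymm, hmean,
    hP_integral (fun q => (f q - 1) ^ 2) (by fun_prop) (fun q => by simp only [hsymm])]
  simp only [hexp]
  rw [integral_add (hint (fun q => f q ^ 2 - 2 * f q) (by fun_prop)) (hint _ (by fun_prop)),
    integral_sub (hint (fun q => f q ^ 2) (by fun_prop)) (hint _ (by fun_prop)),
    integral_const_mul, hsq, hmean, hone]
  norm_num
end

section
/- Let (X₁, X₂) be distributed according to the uniform probability measure P on the lower triangle Ω₂ = {(x₁, x₂) ∈ [0,1]² : x₁ + x₂ ≤ 1}, and let f(x₁, x₂) = |4x₁ − 2| · (|4x₂ − 2| + 1)/2. Then the main effect Sobol' index of x₂, namely S_{x₂} = Var( E_P[f(X₁, X₂) | X₂] ) / Var_P(f), equals −9/20 + (9/8)·ln 2. -/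
/-!
Disintegrating `P` along the second coordinate, `∫ φ ∂P = ∫₀¹ 2 ∫₀^{1-y} φ (x, y) dx dy`
(`integral_lowerTriangle`), so conditionally on `X₂ = y` the first coordinate is uniform on
`[0, 1 - y]`. Since `∫₀ᵗ |4x - 2| dx` is `2t - 2t²` for `t ≤ 1/2` and `2t² - 2t + 1` for
`1/2 ≤ t` (`integral_abs_left`, `integral_abs_right`), the conditional expectation is the
explicit function `condMean` of `y`; this is checked against the defining property of the
conditional expectation on the sets `Prod.snd ⁻¹' s`.

Both variances are then one-dimensional integrals over `[0, 1/2]` and `[1/2, 1]`. The integrands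
are polynomials, except that the second moment of `condMean` has on `[0, 1/2]` an additional
term `1 / (2 (1 - y))`, which produces the logarithm:
`E[condMean²] = 4/5 + (log 2)/2`, `E[f] = 1` and `E[f²] = 13/9`.
-/

open MeasureTheory ProbabilityTheory Set Real

/-- The lower triangle of the unit square. -/
def lowerTriangle : Set (ℝ × ℝ) :=
  {q : ℝ × ℝ | q.1 ∈ Icc (0 : ℝ) 1 ∧ q.2 ∈ Icc (0 : ℝ) 1 ∧ q.1 + q.2 ≤ 1}

/-- The uniform probability measure on the lower triangle, which has area `1/2`. -/
noncomputable def uniformTriangle : Measure (ℝ × ℝ) :=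
  (2 : ENNReal) • volume.restrict lowerTriangle

/-- The two-dimensional g-function with parameters `0` and `1`. -/
noncomputable def gFun (q : ℝ × ℝ) : ℝ := |4 * q.1 - 2| * (|4 * q.2 - 2| + 1) / 2

/-- The conditional mean of `gFun` given that the second coordinate is `y`, for `y ∈ [0, 1]`:
the factor depending on `y` times the mean of `|4x - 2|` over `[0, 1 - y]`. The values for other
`y` are irrelevant. -/
noncomputable def condMean (y : ℝ) : ℝ :=
  (|4 * y - 2| + 1) / 2 *
    if y ≤ 1 / 2 then (2 * (1 - y) ^ 2 - 2 * (1 - y) + 1) / (1 - y) else 2 * y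

lemma measurableSet_lowerTriangle : MeasurableSet lowerTriangle := by
  have h : IsClosed lowerTriangle := by
    refine (isClosed_Icc.preimage continuous_fst).inter
      ((isClosed_Icc.preimage continuous_snd).inter ?_)
    exact isClosed_le (continuous_fst.add continuous_snd) continuous_const
  exact h.measurableSet

instance : IsFiniteMeasure uniformTriangle := by
  have h : volume lowerTriangle < ⊤ := by
    refine (measure_mono (t := Icc (0 : ℝ) 1 ×ˢ Icc (0 : ℝ) 1) ?_).trans_lt
      (isCompact_Icc.prod isCompact_Icc).measure_lt_top
    rintro q ⟨h1, h2, -⟩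
    exact ⟨h1, h2⟩
  refine ⟨?_⟩
  simp only [uniformTriangle, Measure.smul_apply, Measure.restrict_apply_univ, smul_eq_mul]
  exact ENNReal.mul_lt_top (by simp) h

lemma ae_mem_lowerTriangle : ∀ᵐ q ∂uniformTriangle, q ∈ lowerTriangle :=
  Measure.ae_smul_measure (ae_restrict_mem measurableSet_lowerTriangle) _

/-- Fubini's theorem on the lower triangle, integrating over the first coordinate first. -/
lemma integral_lowerTriangle {φ : ℝ × ℝ → ℝ} (hφ : Integrable φ uniformTriangle) :
    ∫ q, φ q ∂uniformTriangle = ∫ y in (0 : ℝ)..1, 2 * ∫ x in (0 : ℝ)..(1 - y), φ (x, y) := by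
  have hi : IntegrableOn φ lowerTriangle := by
    rwa [uniformTriangle, integrable_smul_measure (by simp) (by simp)] at hφ
  rw [uniformTriangle, integral_smul_measure,
    ← integral_indicator measurableSet_lowerTriangle, Measure.volume_eq_prod,
    integral_prod_symm _
      (by
        rw [← Measure.volume_eq_prod]
        exact (integrable_indicator_iff measurableSet_lowerTriangle).2 hi),
    intervalIntegral.integral_const_mul, intervalIntegral.integral_of_le zero_le_one,
    ← integral_Icc_eq_integral_Ioc, ← integral_indicator measurableSet_Icc]
  simp only [ENNReal.toReal_ofNat, smul_eq_mul]
  congr 2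
  ext y
  by_cases hy : y ∈ Icc (0 : ℝ) 1
  · rw [indicator_of_mem hy, intervalIntegral.integral_of_le (by linarith [hy.2]),
      ← integral_Icc_eq_integral_Ioc, ← integral_indicator measurableSet_Icc]
    congr 1
    ext x
    have : (x, y) ∈ lowerTriangle ↔ x ∈ Icc (0 : ℝ) (1 - y) := by
      simp only [lowerTriangle, mem_ofPred_eq, mem_Icc] at hy ⊢
      constructor
      · rintro ⟨⟨_, _⟩, _, _⟩
        constructor <;> linarith
      · rintro ⟨_, _⟩
        refine ⟨⟨?_, ?_⟩, hy, ?_⟩ <;> linarith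
    simp only [indicator, this]
  · rw [indicator_of_notMem hy]
    refine integral_eq_zero_of_ae (ae_of_all _ fun x => ?_)
    exact indicator_of_notMem (fun h => hy h.2.1) _

instance : IsProbabilityMeasure uniformTriangle := by
  have h := integral_lowerTriangle (integrable_const (1 : ℝ))
  have e : ∫ y in (0 : ℝ)..1, 2 * ∫ _ in (0 : ℝ)..(1 - y), (1 : ℝ) = 1 := by
    simp only [intervalIntegral.integral_const, sub_zero, smul_eq_mul, mul_one,
      intervalIntegral.integral_const_mul]
    rw [intervalIntegral.integral_sub (by simp) (by simp)]
    norm_num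
  rw [e, integral_const, smul_eq_mul, mul_one, measureReal_def] at h
  exact ⟨(ENNReal.toReal_eq_one_iff _).1 h⟩

lemma integral_abs_left {t : ℝ} (h0 : 0 ≤ t) (h1 : t ≤ 1 / 2) :
    ∫ x in (0 : ℝ)..t, |4 * x - 2| = 2 * t - 2 * t ^ 2 := by
  have : ∫ x in (0 : ℝ)..t, |4 * x - 2| = ∫ x in (0 : ℝ)..t, (2 - 4 * x) := by
    refine intervalIntegral.integral_congr fun x hx => ?_
    rw [uIcc_of_le h0] at hx
    rw [abs_of_nonpos (by linarith [hx.2])]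
    ring
  rw [this, intervalIntegral.integral_sub (by simp)
    (Continuous.intervalIntegrable (by fun_prop) _ _),
    intervalIntegral.integral_const_mul]
  simp
  ring

lemma integral_abs_right {t : ℝ} (h1 : 1 / 2 ≤ t) :
    ∫ x in (0 : ℝ)..t, |4 * x - 2| = 2 * t ^ 2 - 2 * t + 1 := by
  have c : Continuous fun x : ℝ => |4 * x - 2| := by fun_prop
  rw [← intervalIntegral.integral_add_adjacent_intervals (c.intervalIntegrable 0 (1 / 2))
    (c.intervalIntegrable (1 / 2) t), integral_abs_left (by norm_num) le_rfl]
  have : ∫ x in (1 / 2 : ℝ)..t, |4 * x - 2| = ∫ x in (1 / 2 : ℝ)..t, (4 * x - 2) := by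
    refine intervalIntegral.integral_congr fun x hx => ?_
    rw [uIcc_of_le h1] at hx
    exact abs_of_nonneg (by linarith [hx.1])
  rw [this, intervalIntegral.integral_sub
    (Continuous.intervalIntegrable (by fun_prop) _ _) (by simp),
    intervalIntegral.integral_const_mul]
  simp
  ring

lemma integral_sq (t : ℝ) :
    ∫ x in (0 : ℝ)..t, (4 * x - 2) ^ 2 = ((4 * t - 2) ^ 3 + 8) / 12 := by
  have h : ∀ x ∈ uIcc (0 : ℝ) t, HasDerivAt (fun x : ℝ => (4 * x - 2) ^ 3 / 12)
      ((4 * x - 2) ^ 2) x := fun x _ => by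
    have := ((((hasDerivAt_id x).const_mul 4).sub_const 2).pow 3).div_const 12
    refine this.congr_deriv ?_
    simp
    ring
  rw [intervalIntegral.integral_eq_sub_of_hasDerivAt h
    (Continuous.intervalIntegrable (by fun_prop) _ _)]
  ring

/-- The unnormalised conditional mean. At `y = 1` both sides vanish. -/
lemma integral_gFun_section {y : ℝ} (hy : y ∈ Icc (0 : ℝ) 1) :
    ∫ x in (0 : ℝ)..(1 - y), gFun (x, y) = (1 - y) * condMean y := by
  have : ∀ x, gFun (x, y) = |4 * x - 2| * ((|4 * y - 2| + 1) / 2) := fun x => by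
    simp only [gFun]; ring
  simp only [this, intervalIntegral.integral_mul_const, condMean]
  split_ifs with h
  · rw [integral_abs_right (by linarith)]
    have : 1 - y ≠ 0 := by linarith
    field_simp
  · rw [integral_abs_left (by linarith [hy.2]) (by linarith)]
    ring

lemma measurable_condMean : Measurable condMean := by
  unfold condMean
  refine Measurable.mul (by fun_prop) (Measurable.ite measurableSet_Iic ?_ ?_) <;> fun_prop

lemma measurable_gFun : Measurable gFun := by
  unfold gFun
  fun_prop

lemma condMean_of_le {y : ℝ} (h : y ≤ 1 / 2) :
    condMean y = (3 - 4 * y) / 2 * ((2 * (1 - y) ^ 2 - 2 * (1 - y) + 1) / (1 - y)) := by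
  rw [condMean, if_pos h, abs_of_nonpos (by linarith)]
  ring

/-- The two branches of `condMean` agree at `1/2`. -/
lemma condMean_of_ge {y : ℝ} (h : 1 / 2 ≤ y) : condMean y = (4 * y - 1) * y := by
  rcases h.eq_or_lt with rfl | h
  · rw [condMean_of_le le_rfl]; norm_num
  · rw [condMean, if_neg (by linarith), abs_of_nonneg (by linarith)]
    ring

lemma abs_condMean_le {y : ℝ} (hy : y ∈ Icc (0 : ℝ) 1) : |condMean y| ≤ 3 := by
  obtain ⟨h0, h1⟩ := hy
  rcases le_total y (1 / 2) with h | h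
  · have hp : (0 : ℝ) < 1 - y := by linarith
    have ha : 0 ≤ (2 * (1 - y) ^ 2 - 2 * (1 - y) + 1) / (1 - y) :=
      div_nonneg (by nlinarith [sq_nonneg (2 * (1 - y) - 1)]) hp.le
    have hb : (2 * (1 - y) ^ 2 - 2 * (1 - y) + 1) / (1 - y) ≤ 2 := by
      rw [div_le_iff₀ hp]; nlinarith
    rw [condMean_of_le h, abs_of_nonneg (mul_nonneg (by linarith) ha)]
    nlinarith
  · rw [condMean_of_ge h, abs_of_nonneg (mul_nonneg (by linarith) h0)]
    nlinarith

lemma memLp_condMean : MemLp (fun q : ℝ × ℝ => condMean q.2) 2 uniformTriangle := by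
  refine MemLp.of_bound (measurable_condMean.comp measurable_snd).aestronglyMeasurable 3 ?_
  filter_upwards [ae_mem_lowerTriangle] with q hq
  exact abs_condMean_le hq.2.1

lemma memLp_gFun : MemLp gFun 2 uniformTriangle := by
  refine MemLp.of_bound measurable_gFun.aestronglyMeasurable 3 ?_
  filter_upwards [ae_mem_lowerTriangle] with q hq
  obtain ⟨⟨h1, h2⟩, ⟨h3, h4⟩, -⟩ := hq
  have a1 : |4 * q.1 - 2| ≤ 2 := abs_le.2 ⟨by linarith, by linarith⟩
  have a2 : |4 * q.2 - 2| ≤ 2 := abs_le.2 ⟨by linarith, by linarith⟩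
  have n1 := abs_nonneg (4 * q.1 - 2)
  have n2 := abs_nonneg (4 * q.2 - 2)
  rw [gFun, Real.norm_eq_abs, abs_of_nonneg (by positivity)]
  nlinarith

/-- On a set `Prod.snd ⁻¹' s` the inner integrals of Fubini's theorem agree for both functions:
they are `1_s(y) (1 - y) condMean y`. -/
lemma condExp_gFun :
    uniformTriangle[gFun | MeasurableSpace.comap Prod.snd inferInstance]
      =ᵐ[uniformTriangle] fun q => condMean q.2 := by
  have hm : MeasurableSpace.comap (Prod.snd : ℝ × ℝ → ℝ) inferInstance
      ≤ (inferInstance : MeasurableSpace (ℝ × ℝ)) := measurable_snd.comap_le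
  have i1 := memLp_condMean.integrable one_le_two
  have i2 := memLp_gFun.integrable one_le_two
  symm
  refine ae_eq_condExp_of_forall_setIntegral_eq hm i2 (fun _ _ _ => i1.integrableOn) ?_ ?_
  · rintro _ ⟨s, hs, rfl⟩ -
    have hs' : MeasurableSet (Prod.snd ⁻¹' s : Set (ℝ × ℝ)) := measurable_snd hs
    rw [← integral_indicator hs', ← integral_indicator hs',
      integral_lowerTriangle (i1.indicator hs'), integral_lowerTriangle (i2.indicator hs')]
    refine intervalIntegral.integral_congr fun y hy => ?_
    rw [uIcc_of_le zero_le_one] at hy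
    by_cases h : y ∈ s
    · simp [indicator, h, integral_gFun_section hy]
    · simp [indicator, h]
  · exact (measurable_condMean.comp (comap_measurable _)).stronglyMeasurable.aestronglyMeasurable

/-- An integral over `[0, 1]` computed from antiderivatives `A`, `B` of the expressions `a`, `b`
of the integrand on the two halves. -/
lemma integral_of_halves {u a b A B : ℝ → ℝ}
    (ha : ∀ y ∈ Icc (0 : ℝ) (1 / 2), u y = a y) (hb : ∀ y ∈ Icc (1 / 2 : ℝ) 1, u y = b y)
    (hA : ∀ y ∈ Icc (0 : ℝ) (1 / 2), HasDerivAt A (a y) y)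
    (hB : ∀ y ∈ Icc (1 / 2 : ℝ) 1, HasDerivAt B (b y) y)
    (ca : ContinuousOn a (Icc 0 (1 / 2))) (cb : ContinuousOn b (Icc (1 / 2) 1)) :
    ∫ y in (0 : ℝ)..1, u y = (A (1 / 2) - A 0) + (B 1 - B (1 / 2)) := by
  have e1 : uIcc (0 : ℝ) (1 / 2) = Icc 0 (1 / 2) := uIcc_of_le (by norm_num)
  have e2 : uIcc (1 / 2 : ℝ) 1 = Icc (1 / 2) 1 := uIcc_of_le (by norm_num)
  have i1 : IntervalIntegrable u volume 0 (1 / 2) :=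
    ContinuousOn.intervalIntegrable (by rw [e1]; exact ca.congr ha)
  have i2 : IntervalIntegrable u volume (1 / 2) 1 :=
    ContinuousOn.intervalIntegrable (by rw [e2]; exact cb.congr hb)
  rw [← intervalIntegral.integral_add_adjacent_intervals i1 i2]
  congr 1
  · exact intervalIntegral.integral_eq_sub_of_hasDerivAt
      (fun y hy => by rw [e1] at hy; rw [ha y hy]; exact hA y hy) i1
  · exact intervalIntegral.integral_eq_sub_of_hasDerivAt
      (fun y hy => by rw [e2] at hy; rw [hb y hy]; exact hB y hy) i2

/-- The derivative of a polynomial of degree at most six without constant term. -/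
lemma hasDerivAt_poly (c₁ c₂ c₃ c₄ c₅ c₆ y : ℝ) :
    HasDerivAt (fun y : ℝ => c₁ * y + c₂ * y ^ 2 + c₃ * y ^ 3 + c₄ * y ^ 4 + c₅ * y ^ 5
      + c₆ * y ^ 6)
      (c₁ + c₂ * (2 * y) + c₃ * (3 * y ^ 2) + c₄ * (4 * y ^ 3) + c₅ * (5 * y ^ 4)
        + c₆ * (6 * y ^ 5)) y := by
  have p (n : ℕ) := hasDerivAt_pow n y
  refine (((((((hasDerivAt_id y).const_mul c₁).add ((p 2).const_mul c₂)).add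
    ((p 3).const_mul c₃)).add ((p 4).const_mul c₄)).add ((p 5).const_mul c₅)).add
    ((p 6).const_mul c₆)).congr_deriv ?_
  norm_num

lemma integral_gFun : ∫ q, gFun q ∂uniformTriangle = 1 := by
  rw [integral_lowerTriangle (memLp_gFun.integrable one_le_two)]
  rw [integral_of_halves
    (a := fun y => (3 - 4 * y) * (2 * (1 - y) ^ 2 - 2 * (1 - y) + 1))
    (b := fun y => 2 * (1 - y) * ((4 * y - 1) * y))
    (A := fun y => 3 * y + (-5) * y ^ 2 + (14 / 3) * y ^ 3 + (-2) * y ^ 4 + 0 * y ^ 5 + 0 * y ^ 6)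
    (B := fun y => 0 * y + (-1) * y ^ 2 + (10 / 3) * y ^ 3 + (-2) * y ^ 4 + 0 * y ^ 5 + 0 * y ^ 6)]
  · norm_num
  · intro y hy
    rw [integral_gFun_section ⟨hy.1, by linarith [hy.2]⟩, condMean_of_le hy.2]
    have : 1 - y ≠ 0 := by linarith [hy.2]
    field_simp
  · intro y hy
    rw [integral_gFun_section ⟨by linarith [hy.1], hy.2⟩, condMean_of_ge hy.1]
    ring
  · exact fun y _ => (hasDerivAt_poly _ _ _ _ _ _ y).congr_deriv (by ring)
  · exact fun y _ => (hasDerivAt_poly _ _ _ _ _ _ y).congr_deriv (by ring)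
  · fun_prop
  · fun_prop

lemma integral_gFun_sq : ∫ q, gFun q ^ 2 ∂uniformTriangle = 13 / 9 := by
  rw [integral_lowerTriangle memLp_gFun.integrable_sq]
  have sec (y : ℝ) : ∫ x in (0 : ℝ)..(1 - y), gFun (x, y) ^ 2
      = ((4 * (1 - y) - 2) ^ 3 + 8) / 12 * ((|4 * y - 2| + 1) ^ 2 / 4) := by
    rw [← integral_sq, ← intervalIntegral.integral_mul_const]
    congr 1
    ext x
    simp only [gFun]
    rw [← sq_abs (4 * x - 2)]
    ring
  simp only [sec]
  rw [integral_of_halves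
    (a := fun y => ((2 - 4 * y) ^ 3 + 8) / 24 * (3 - 4 * y) ^ 2)
    (b := fun y => ((2 - 4 * y) ^ 3 + 8) / 24 * (4 * y - 1) ^ 2)
    (A := fun y => 6 * y + (-17) * y ^ 2 + (284 / 9) * y ^ 3 + (-38) * y ^ 4 + (128 / 5) * y ^ 5
      + (-64 / 9) * y ^ 6)
    (B := fun y => (2 / 3) * y + (-11 / 3) * y ^ 2 + (92 / 9) * y ^ 3 + (-50 / 3) * y ^ 4
      + (256 / 15) * y ^ 5 + (-64 / 9) * y ^ 6)]
  · norm_num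
  · intro y hy
    rw [abs_of_nonpos (by linarith [hy.2])]
    ring
  · intro y hy
    rw [abs_of_nonneg (by linarith [hy.1])]
    ring
  · exact fun y _ => (hasDerivAt_poly _ _ _ _ _ _ y).congr_deriv (by ring)
  · exact fun y _ => (hasDerivAt_poly _ _ _ _ _ _ y).congr_deriv (by ring)
  · fun_prop
  · fun_prop

lemma integral_condMean_sq :
    ∫ q : ℝ × ℝ, condMean q.2 ^ 2 ∂uniformTriangle = 4 / 5 + Real.log 2 / 2 := by
  rw [integral_lowerTriangle (φ := fun q => condMean q.2 ^ 2) memLp_condMean.integrable_sq]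
  simp only [intervalIntegral.integral_const, sub_zero, smul_eq_mul]
  rw [integral_of_halves
    (a := fun y => (3 - 4 * y) ^ 2 / 2 * ((2 * (1 - y) ^ 2 - 2 * (1 - y) + 1) ^ 2 / (1 - y)))
    (b := fun y => 2 * (1 - y) * ((4 * y - 1) * y) ^ 2)
    (A := fun y => 4 * y + (-13) * y ^ 2 + 22 * y ^ 3 + (-49 / 2) * y ^ 4 + 16 * y ^ 5
      + (-16 / 3) * y ^ 6 - Real.log (1 - y) / 2)
    (B := fun y => 0 * y + 0 * y ^ 2 + (2 / 3) * y ^ 3 + (-9 / 2) * y ^ 4 + (48 / 5) * y ^ 5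
      + (-16 / 3) * y ^ 6)]
  · have : Real.log (1 - 1 / 2) = - Real.log 2 := by
      rw [← Real.log_inv]; norm_num
    rw [this]
    norm_num
    ring
  · intro y hy
    rw [condMean_of_le hy.2]
    have : 1 - y ≠ 0 := by linarith [hy.2]
    field_simp
  · intro y hy
    rw [condMean_of_ge hy.1]
    ring
  · intro y hy
    have h : 1 - y ≠ 0 := by linarith [hy.2]
    refine ((hasDerivAt_poly _ _ _ _ _ _ y).sub
      ((((hasDerivAt_id y).const_sub 1).log h).div_const 2)).congr_deriv ?_
    simp only [id]
    field_simp
    ring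
  · exact fun y _ => (hasDerivAt_poly _ _ _ _ _ _ y).congr_deriv (by ring)
  · refine ContinuousOn.mul (by fun_prop) (ContinuousOn.div (by fun_prop) (by fun_prop) ?_)
    intro y hy
    linarith [hy.2]
  · fun_prop

/-- For the 2D g-function `f(x₁,x₂) = |4x₁−2|·(|4x₂−2|+1)/2` with `(X₁,X₂)` uniformly
distributed on the lower triangle `Ω₂ = {(x₁,x₂) ∈ [0,1]² : x₁ + x₂ ≤ 1}`, the main effect
Sobol' index of `x₂`, `S_{x₂} = Var(E[f | X₂]) / Var(f)`, equals `−9/20 + (9/8)·ln 2`. -/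
theorem main_effect_x2_g_function_lower_triangle
    (Ω₂ : Set (ℝ × ℝ))
    (hΩ₂ : Ω₂ = {q : ℝ × ℝ | q.1 ∈ Icc (0 : ℝ) 1 ∧ q.2 ∈ Icc (0 : ℝ) 1 ∧ q.1 + q.2 ≤ 1})
    (P : Measure (ℝ × ℝ)) (hP : P = (2 : ENNReal) • volume.restrict Ω₂)
    (f : ℝ × ℝ → ℝ) (hf : f = fun q => |4 * q.1 - 2| * (|4 * q.2 - 2| + 1) / 2) :
    variance (P[f | MeasurableSpace.comap Prod.snd inferInstance]) P / variance f P
      = -9 / 20 + (9 / 8) * Real.log 2 := by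
  obtain rfl : P = uniformTriangle := by rw [hP, hΩ₂]; rfl
  obtain rfl : f = gFun := hf
  have mean : ∫ q : ℝ × ℝ, condMean q.2 ∂uniformTriangle = 1 := by
    rw [← integral_congr_ae condExp_gFun, integral_condExp measurable_snd.comap_le, integral_gFun]
  rw [variance_congr condExp_gFun, variance_eq_sub memLp_condMean, variance_eq_sub memLp_gFun]
  simp only [Pi.pow_apply]
  rw [mean, integral_condMean_sq, integral_gFun, integral_gFun_sq]
  ring
end

section
/- Let (X₁, X₂) be distributed according to the uniform probability measure P on the lower triangle Ω₂ = {(x₁, x₂) ∈ [0,1]² : x₁ + x₂ ≤ 1}, and let f(x₁, x₂) = |4x₁ − 2| · (|4x₂ − 2| + 1)/2. Then the total effect Sobol' indices are S^T_{x₁} = E_P[Var(f | X₂)]/Var_P(f) = 29/20 − (9/8)·ln 2 and S^T_{x₂} = E_P[Var(f | X₁)]/Var_P(f) = 133/40 − (9/2)·ln 2. -/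
open MeasureTheory ProbabilityTheory Set Real

/-! Conditionally on one coordinate being `x`, the other one is uniform on `[0, 1 - x]`. Hence for
`f = u(x) v(y)` the conditional expectation is `u(x) V(1 - x) / (1 - x)` with `V(t) = ∫₀ᵗ v`, and
with `W(t) = ∫₀ᵗ v²` the expected conditional variance is
`2 ∫₀¹ u(1 - t)² (W(t) - V(t)² / t) dt` (`integral_sub_condExp_sq`). This is proved once for an
abstract pair of coordinates `(ξ, η)` whose joint law is uniform on the triangle
(`UniformTriangle`), and applied with `(u, v) = (|4x - 2|, (|4y - 2| + 1) / 2)` and with the roles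
exchanged. All remaining integrals are one-dimensional with integrands that are, on each of
`[0, 1/2]` and `[1/2, 1]`, a polynomial plus a multiple of `1 / t` (`integral_poly`,
`integral_two_pieces`); the `1 / t` term on `[1/2, 1]` produces the `log 2`. -/

/-! ### Piecewise polynomial integrals -/

theorem integral_poly {φ : ℝ → ℝ} {a b : ℝ} (c0 c1 c2 c3 c4 c5 l : ℝ)
    (hab : a ≤ b) (hl : l = 0 ∨ 0 < a)
    (h : ∀ t ∈ Icc a b,
      φ t = c0 + c1 * t + c2 * t ^ 2 + c3 * t ^ 3 + c4 * t ^ 4 + c5 * t ^ 5 + l * t⁻¹) :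
    IntervalIntegrable φ volume a b ∧ ∫ t in a..b, φ t =
      (c0 * b + c1 * b ^ 2 / 2 + c2 * b ^ 3 / 3 + c3 * b ^ 4 / 4 + c4 * b ^ 5 / 5
        + c5 * b ^ 6 / 6 + l * log b)
      - (c0 * a + c1 * a ^ 2 / 2 + c2 * a ^ 3 / 3 + c3 * a ^ 4 / 4 + c4 * a ^ 5 / 5
        + c5 * a ^ 6 / 6 + l * log a) := by
  have hder : ∀ t ∈ Icc a b, HasDerivAt (fun b : ℝ => c0 * b + c1 * b ^ 2 / 2 + c2 * b ^ 3 / 3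
      + c3 * b ^ 4 / 4 + c4 * b ^ 5 / 5 + c5 * b ^ 6 / 6 + l * log b) (φ t) t := by
    intro t ht
    rw [h t ht]
    have hlog : HasDerivAt (fun b => l * log b) (l * t⁻¹) t := by
      rcases hl with rfl | hl
      · simpa using hasDerivAt_const t (0 : ℝ)
      · exact (hasDerivAt_log (hl.trans_le ht.1).ne').const_mul l
    have hpow : ∀ n : ℕ, HasDerivAt (fun b : ℝ => b ^ (n + 1)) ((n + 1 : ℝ) * t ^ n) t := by
      intro n
      simpa using hasDerivAt_pow (n + 1) t
    have h1 := (hasDerivAt_id t).const_mul c0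
    have h2 := ((hpow 1).const_mul c1).div_const 2
    have h3 := ((hpow 2).const_mul c2).div_const 3
    have h4 := ((hpow 3).const_mul c3).div_const 4
    have h5 := ((hpow 4).const_mul c4).div_const 5
    have h6 := ((hpow 5).const_mul c5).div_const 6
    refine ((((((h1.add h2).add h3).add h4).add h5).add h6).add hlog).congr_deriv ?_
    push_cast
    ring
  have hcont : ContinuousOn φ (Icc a b) := by
    refine ContinuousOn.congr ?_ h
    refine ContinuousOn.add (by fun_prop) ?_
    rcases hl with rfl | hl
    · simpa using continuousOn_const
    · exact continuousOn_const.mul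
        (continuousOn_id.inv₀ fun t ht => (hl.trans_le ht.1).ne')
  have hint : IntervalIntegrable φ volume a b :=
    ContinuousOn.intervalIntegrable (by rwa [uIcc_of_le hab])
  exact ⟨hint, intervalIntegral.integral_eq_sub_of_hasDerivAt
    (by rwa [uIcc_of_le hab]) hint⟩

theorem integral_two_pieces {φ : ℝ → ℝ} {b : ℝ} (c0 c1 c2 c3 c4 c5 d0 d1 d2 d3 d4 d5 l : ℝ)
    (hb : 1 / 2 ≤ b)
    (h : ∀ t ∈ Icc (0 : ℝ) (1 / 2),
      φ t = c0 + c1 * t + c2 * t ^ 2 + c3 * t ^ 3 + c4 * t ^ 4 + c5 * t ^ 5)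
    (h' : ∀ t ∈ Icc (1 / 2 : ℝ) b,
      φ t = d0 + d1 * t + d2 * t ^ 2 + d3 * t ^ 3 + d4 * t ^ 4 + d5 * t ^ 5 + l * t⁻¹) :
    ∫ t in (0 : ℝ)..b, φ t =
      (c0 / 2 + c1 / 8 + c2 / 24 + c3 / 64 + c4 / 160 + c5 / 384)
      + (d0 * b + d1 * b ^ 2 / 2 + d2 * b ^ 3 / 3 + d3 * b ^ 4 / 4 + d4 * b ^ 5 / 5
        + d5 * b ^ 6 / 6 + l * log b)
      - (d0 / 2 + d1 / 8 + d2 / 24 + d3 / 64 + d4 / 160 + d5 / 384 - l * log 2) := by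
  obtain ⟨i1, e1⟩ := integral_poly (φ := φ) c0 c1 c2 c3 c4 c5 0
    (by norm_num : (0 : ℝ) ≤ 1 / 2) (Or.inl rfl) (by simpa using h)
  obtain ⟨i2, e2⟩ := integral_poly (φ := φ) d0 d1 d2 d3 d4 d5 l
    hb (Or.inr (by norm_num : (0 : ℝ) < 1 / 2)) h'
  rw [← intervalIntegral.integral_add_adjacent_intervals i1 i2, e1, e2, one_div, log_inv]
  ring

/-! ### Primitives of the two factors and of their squares -/

theorem abs_left {t : ℝ} (h : t ≤ 1 / 2) : |4 * t - 2| = 2 - 4 * t := by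
  rw [abs_of_nonpos (by linarith)]; ring

theorem abs_right {t : ℝ} (h : 1 / 2 ≤ t) : |4 * t - 2| = 4 * t - 2 :=
  abs_of_nonneg (by linarith)

theorem primA_left {t : ℝ} (h0 : 0 ≤ t) (h : t ≤ 1 / 2) :
    ∫ y in (0 : ℝ)..t, |4 * y - 2| = 2 * t - 2 * t ^ 2 := by
  rw [(integral_poly 2 (-4) 0 0 0 0 0 h0 (Or.inl rfl) fun y hy => by
    rw [abs_left (hy.2.trans h)]; ring).2]
  ring

theorem primA_right {t : ℝ} (h : 1 / 2 ≤ t) :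
    ∫ y in (0 : ℝ)..t, |4 * y - 2| = 1 - 2 * t + 2 * t ^ 2 := by
  rw [integral_two_pieces 2 (-4) 0 0 0 0 (-2) 4 0 0 0 0 0 h
    (fun y hy => by rw [abs_left hy.2]; ring) (fun y hy => by rw [abs_right hy.1]; ring)]
  ring

theorem primA2 {t : ℝ} (h0 : 0 ≤ t) :
    ∫ y in (0 : ℝ)..t, |4 * y - 2| ^ 2 = 4 * t - 8 * t ^ 2 + 16 / 3 * t ^ 3 := by
  rw [(integral_poly 4 (-16) 16 0 0 0 0 h0 (Or.inl rfl) fun y hy => by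
    rw [sq_abs]; ring).2]
  ring

theorem primB_left {t : ℝ} (h0 : 0 ≤ t) (h : t ≤ 1 / 2) :
    ∫ y in (0 : ℝ)..t, (|4 * y - 2| + 1) / 2 = 3 / 2 * t - t ^ 2 := by
  rw [(integral_poly (3 / 2) (-2) 0 0 0 0 0 h0 (Or.inl rfl) fun y hy => by
    rw [abs_left (hy.2.trans h)]; ring).2]
  ring

theorem primB_right {t : ℝ} (h : 1 / 2 ≤ t) :
    ∫ y in (0 : ℝ)..t, (|4 * y - 2| + 1) / 2 = 1 / 2 - 1 / 2 * t + t ^ 2 := by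
  rw [integral_two_pieces (3 / 2) (-2) 0 0 0 0 (-1 / 2) 2 0 0 0 0 0 h
    (fun y hy => by rw [abs_left hy.2]; ring) (fun y hy => by rw [abs_right hy.1]; ring)]
  ring

theorem primB2_left {t : ℝ} (h0 : 0 ≤ t) (h : t ≤ 1 / 2) :
    ∫ y in (0 : ℝ)..t, ((|4 * y - 2| + 1) / 2) ^ 2 = 9 / 4 * t - 3 * t ^ 2 + 4 / 3 * t ^ 3 := by
  rw [(integral_poly (9 / 4) (-6) 4 0 0 0 0 h0 (Or.inl rfl) fun y hy => by
    rw [abs_left (hy.2.trans h)]; ring).2]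
  ring

theorem primB2_right {t : ℝ} (h : 1 / 2 ≤ t) :
    ∫ y in (0 : ℝ)..t, ((|4 * y - 2| + 1) / 2) ^ 2
      = 1 / 2 + 1 / 4 * t - t ^ 2 + 4 / 3 * t ^ 3 := by
  rw [integral_two_pieces (9 / 4) (-6) 4 0 0 0 (1 / 4) (-2) 4 0 0 0 0 h
    (fun y hy => by rw [abs_left hy.2]; ring) (fun y hy => by rw [abs_right hy.1]; ring)]
  ring

/-! ### The uniform law on the triangle -/

/-- The pair `(ξ, η)` of coordinates is uniformly distributed on the triangle under `P`, expressed
through iterated integrals: `η` runs over `[0, 1 - x]` when `ξ = x`. -/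
structure UniformTriangle (P : Measure (ℝ × ℝ)) (ξ η : ℝ × ℝ → ℝ) : Prop where
  meas_fst : Measurable ξ
  meas_snd : Measurable η
  mem : ∀ᵐ q ∂P, ξ q ∈ Icc (0 : ℝ) 1 ∧ η q ∈ Icc (0 : ℝ) 1
  integral_eq : ∀ h : ℝ → ℝ → ℝ, Integrable (fun q => h (ξ q) (η q)) P →
    ∫ q, h (ξ q) (η q) ∂P = 2 * ∫ x in (0 : ℝ)..1, ∫ y in (0 : ℝ)..(1 - x), h x y

theorem measurableSet_triangle : MeasurableSet
    {q : ℝ × ℝ | q.1 ∈ Icc (0 : ℝ) 1 ∧ q.2 ∈ Icc (0 : ℝ) 1 ∧ q.1 + q.2 ≤ 1} := by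
  refine MeasurableSet.inter (measurable_fst measurableSet_Icc)
    (MeasurableSet.inter (measurable_snd measurableSet_Icc) ?_)
  exact measurableSet_le (measurable_fst.add measurable_snd) measurable_const

theorem setIntegral_triangle (h : ℝ × ℝ → ℝ)
    (hint : IntegrableOn h
      {q : ℝ × ℝ | q.1 ∈ Icc (0 : ℝ) 1 ∧ q.2 ∈ Icc (0 : ℝ) 1 ∧ q.1 + q.2 ≤ 1} volume) :
    ∫ q in {q : ℝ × ℝ | q.1 ∈ Icc (0 : ℝ) 1 ∧ q.2 ∈ Icc (0 : ℝ) 1 ∧ q.1 + q.2 ≤ 1}, h q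
      = ∫ x in (0 : ℝ)..1, ∫ y in (0 : ℝ)..(1 - x), h (x, y) := by
  have hi := hint.integrable_indicator measurableSet_triangle
  rw [← integral_indicator measurableSet_triangle, Measure.volume_eq_prod, integral_prod _ hi,
    intervalIntegral.integral_of_le zero_le_one, ← integral_Icc_eq_integral_Ioc,
    ← integral_indicator measurableSet_Icc]
  congr 1
  funext x
  by_cases hx : x ∈ Icc (0 : ℝ) 1
  · rw [indicator_of_mem hx, intervalIntegral.integral_of_le (by linarith [hx.2]),
      ← integral_Icc_eq_integral_Ioc, ← integral_indicator measurableSet_Icc]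
    congr 1
    funext y
    obtain ⟨hx0, hx1⟩ := hx
    by_cases hy : y ∈ Icc (0 : ℝ) (1 - x)
    · rw [indicator_of_mem hy, indicator_of_mem]
      exact ⟨⟨hx0, hx1⟩, ⟨hy.1, by linarith [hy.2]⟩, by linarith [hy.2]⟩
    · rw [indicator_of_notMem hy, indicator_of_notMem]
      rintro ⟨-, ⟨h1, -⟩, h2⟩
      exact hy ⟨h1, by linarith⟩
  · rw [indicator_of_notMem hx]
    have : ∀ y, indicator {q : ℝ × ℝ | q.1 ∈ Icc (0 : ℝ) 1 ∧ q.2 ∈ Icc (0 : ℝ) 1 ∧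
        q.1 + q.2 ≤ 1} h (x, y) = 0 := fun y => indicator_of_notMem (fun hq => hx hq.1) h
    simp only [this, integral_zero]

theorem uniformTriangle_fst : UniformTriangle ((2 : ENNReal) • volume.restrict
    {q : ℝ × ℝ | q.1 ∈ Icc (0 : ℝ) 1 ∧ q.2 ∈ Icc (0 : ℝ) 1 ∧ q.1 + q.2 ≤ 1})
    Prod.fst Prod.snd where
  meas_fst := measurable_fst
  meas_snd := measurable_snd
  mem := Measure.ae_smul_measure
    ((ae_restrict_mem measurableSet_triangle).mono fun q hq => ⟨hq.1, hq.2.1⟩) _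
  integral_eq h hint := by
    rw [integrable_smul_measure (by norm_num) (by norm_num)] at hint
    rw [integral_smul_measure, setIntegral_triangle _ hint]
    simp

theorem measurePreserving_swap_triangle : MeasurePreserving (Prod.swap : ℝ × ℝ → ℝ × ℝ)
    (volume.restrict {q : ℝ × ℝ | q.1 ∈ Icc (0 : ℝ) 1 ∧ q.2 ∈ Icc (0 : ℝ) 1 ∧ q.1 + q.2 ≤ 1})
    (volume.restrict
      {q : ℝ × ℝ | q.1 ∈ Icc (0 : ℝ) 1 ∧ q.2 ∈ Icc (0 : ℝ) 1 ∧ q.1 + q.2 ≤ 1}) := by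
  have h := (Measure.measurePreserving_swap (μ := (volume : Measure ℝ))
    (ν := (volume : Measure ℝ))).restrict_preimage measurableSet_triangle
  rw [← Measure.volume_eq_prod] at h
  have hset : (Prod.swap : ℝ × ℝ → ℝ × ℝ) ⁻¹'
      {q : ℝ × ℝ | q.1 ∈ Icc (0 : ℝ) 1 ∧ q.2 ∈ Icc (0 : ℝ) 1 ∧ q.1 + q.2 ≤ 1}
      = {q : ℝ × ℝ | q.1 ∈ Icc (0 : ℝ) 1 ∧ q.2 ∈ Icc (0 : ℝ) 1 ∧ q.1 + q.2 ≤ 1} := by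
    ext q
    simp only [mem_ofPred_eq, mem_preimage, Prod.fst_swap, Prod.snd_swap, add_comm q.2]
    tauto
  rwa [hset] at h

theorem uniformTriangle_snd : UniformTriangle ((2 : ENNReal) • volume.restrict
    {q : ℝ × ℝ | q.1 ∈ Icc (0 : ℝ) 1 ∧ q.2 ∈ Icc (0 : ℝ) 1 ∧ q.1 + q.2 ≤ 1})
    Prod.snd Prod.fst where
  meas_fst := measurable_snd
  meas_snd := measurable_fst
  mem := Measure.ae_smul_measure
    ((ae_restrict_mem measurableSet_triangle).mono fun q hq => ⟨hq.2.1, hq.1⟩) _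
  integral_eq h hint := by
    rw [integrable_smul_measure (by norm_num) (by norm_num)] at hint
    have hemb : MeasurableEmbedding (Prod.swap : ℝ × ℝ → ℝ × ℝ) :=
      MeasurableEquiv.prodComm.measurableEmbedding
    have hint' := (measurePreserving_swap_triangle.integrable_comp_emb hemb
      (g := fun q : ℝ × ℝ => h q.1 q.2)).1 hint
    have e := measurePreserving_swap_triangle.integral_comp hemb
      (fun q : ℝ × ℝ => h q.1 q.2)
    simp only [Prod.fst_swap, Prod.snd_swap] at e
    rw [integral_smul_measure, e, setIntegral_triangle _ hint']
    simp

namespace UniformTriangle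

variable {P : Measure (ℝ × ℝ)} {ξ η : ℝ × ℝ → ℝ}

theorem isProbabilityMeasure [IsFiniteMeasure P] (hT : UniformTriangle P ξ η) :
    IsProbabilityMeasure P := by
  have h := hT.integral_eq (fun _ _ => 1) (integrable_const _)
  have h2 : ∫ x in (0 : ℝ)..1, (1 - x) = 1 / 2 := by
    rw [(integral_poly 1 (-1) 0 0 0 0 0 zero_le_one (Or.inl rfl) fun y hy => by ring).2]
    norm_num
  simp only [integral_const, intervalIntegral.integral_const, smul_eq_mul, mul_one, sub_zero,
    h2] at h
  refine ⟨?_⟩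
  have h3 : (P univ).toReal = 1 := by
    rw [← measureReal_def, h]; norm_num
  rw [← ENNReal.ofReal_toReal (measure_ne_top P univ), h3, ENNReal.ofReal_one]

theorem integrable_of_bound [IsFiniteMeasure P] (hT : UniformTriangle P ξ η) {h : ℝ → ℝ → ℝ}
    (hm : Measurable (Function.uncurry h)) (C : ℝ)
    (hC : ∀ x ∈ Icc (0 : ℝ) 1, ∀ y ∈ Icc (0 : ℝ) 1, |h x y| ≤ C) :
    Integrable (fun q => h (ξ q) (η q)) P :=
  Integrable.of_bound
    (hm.comp (hT.meas_fst.prodMk hT.meas_snd)).aestronglyMeasurable C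
    (hT.mem.mono fun _ hq => hC _ hq.1 _ hq.2)

/-- The expected conditional variance of `u(ξ) v(η)` given `ξ`. -/
theorem integral_sub_condExp_sq [IsFiniteMeasure P] (hT : UniformTriangle P ξ η) {u v : ℝ → ℝ}
    (hu : Continuous u) (hv : Continuous v) {M : ℝ}
    (huM : ∀ x ∈ Icc (0 : ℝ) 1, |u x| ≤ M) (hvM : ∀ x ∈ Icc (0 : ℝ) 1, |v x| ≤ M) :
    ∫ q, (u (ξ q) * v (η q) -
        (P[fun q => u (ξ q) * v (η q) | MeasurableSpace.comap ξ inferInstance]) q) ^ 2 ∂P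
      = 2 * ∫ t in (0 : ℝ)..1, u (1 - t) ^ 2 *
          ((∫ y in (0 : ℝ)..t, v y ^ 2) - (∫ y in (0 : ℝ)..t, v y) ^ 2 / t) := by
  have hM : 0 ≤ M := (abs_nonneg _).trans (huM 0 (by simp))
  set V : ℝ → ℝ := fun t => ∫ y in (0 : ℝ)..t, v y with hV
  have hVc : Continuous V :=
    intervalIntegral.continuous_primitive (fun a b => hv.intervalIntegrable a b) 0
  -- at `x = 1` the denominator vanishes, but so does `V (1 - x)`
  set G : ℝ → ℝ := fun x => u x * (V (1 - x) / (1 - x)) with hG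
  have hGm : Measurable G := by
    have := hVc.measurable
    have := hu.measurable
    fun_prop
  have hVb : ∀ t ∈ Icc (0 : ℝ) 1, |V t / t| ≤ M := by
    intro t ht
    have h1 : ‖∫ y in (0 : ℝ)..t, v y‖ ≤ M * |t - 0| := by
      refine intervalIntegral.norm_integral_le_of_norm_le_const fun y hy => ?_
      rw [uIoc_of_le ht.1] at hy
      exact hvM y ⟨hy.1.le, hy.2.trans ht.2⟩
    rw [abs_div]
    refine div_le_of_le_mul₀ (abs_nonneg _) hM ?_
    simpa using h1
  have hGb : ∀ x ∈ Icc (0 : ℝ) 1, |G x| ≤ M * M := by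
    intro x hx
    rw [hG, abs_mul]
    exact mul_le_mul (huM x hx) (hVb _ ⟨by linarith [hx.2], by linarith [hx.1]⟩)
      (abs_nonneg _) hM
  have hGmul : ∀ x, G x * (1 - x) = u x * V (1 - x) := by
    intro x
    by_cases hx : 1 - x = 0
    · simp [hG, hx, hV]
    · simp only [hG]; field_simp
  have huv : ∀ x ∈ Icc (0 : ℝ) 1, ∀ y ∈ Icc (0 : ℝ) 1, |u x * v y| ≤ M * M := by
    intro x hx y hy
    rw [abs_mul]
    exact mul_le_mul (huM x hx) (hvM y hy) (abs_nonneg _) hM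
  have hum := hu.measurable
  have hvm := hv.measurable
  have hfint : Integrable (fun q => u (ξ q) * v (η q)) P :=
    hT.integrable_of_bound (h := fun x y => u x * v y)
      (by simp only [Function.uncurry_def]; fun_prop) (M * M) huv
  have hGint : Integrable (fun q => G (ξ q)) P :=
    hT.integrable_of_bound (h := fun x _ => G x)
      (by simp only [Function.uncurry_def]; fun_prop) (M * M) (fun x hx _ _ => hGb x hx)
  have hle : MeasurableSpace.comap ξ inferInstance ≤ (inferInstance : MeasurableSpace (ℝ × ℝ)) :=
    hT.meas_fst.comap_le
  have hce : (fun q => G (ξ q)) =ᵐ[P]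
      P[fun q => u (ξ q) * v (η q) | MeasurableSpace.comap ξ inferInstance] := by
    refine ae_eq_condExp_of_forall_setIntegral_eq hle hfint
      (fun s _ _ => hGint.integrableOn) ?_ ?_
    · rintro s ⟨t, ht, rfl⟩ -
      have hs : MeasurableSet (ξ ⁻¹' t) := hT.meas_fst ht
      have hG' : (ξ ⁻¹' t).indicator (fun q => G (ξ q))
          = fun q => t.indicator G (ξ q) := by
        funext q; by_cases hq : ξ q ∈ t <;> simp [indicator, hq]
      have hf' : (ξ ⁻¹' t).indicator (fun q => u (ξ q) * v (η q))
          = fun q => t.indicator u (ξ q) * v (η q) := by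
        funext q; by_cases hq : ξ q ∈ t <;> simp [indicator, hq]
      have i1 := hGint.indicator hs
      have i2 := hfint.indicator hs
      rw [← integral_indicator hs, ← integral_indicator hs]
      rw [hG'] at i1 ⊢
      rw [hf'] at i2 ⊢
      rw [hT.integral_eq (fun x _ => t.indicator G x) i1,
        hT.integral_eq (fun x y => t.indicator u x * v y) i2]
      congr 2
      funext x
      rw [intervalIntegral.integral_const, intervalIntegral.integral_const_mul]
      by_cases hx : x ∈ t
      · simp only [indicator_of_mem hx, smul_eq_mul, sub_zero]
        rw [mul_comm, hGmul]
      · simp [hx]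
    · exact (hGm.comp (comap_measurable ξ)).stronglyMeasurable.aestronglyMeasurable
  have hsq : Integrable (fun q => (u (ξ q) * v (η q) - G (ξ q)) ^ 2) P := by
    refine hT.integrable_of_bound (h := fun x y => (u x * v y - G x) ^ 2)
      (by simp only [Function.uncurry_def]; fun_prop) ((M * M + M * M) ^ 2) ?_
    intro x hx y hy
    rw [abs_pow]
    refine pow_le_pow_left₀ (abs_nonneg _) ?_ 2
    exact (abs_sub _ _).trans (add_le_add (huv x hx y hy) (hGb x hx))
  have hrw : ∫ q, (u (ξ q) * v (η q) -
        (P[fun q => u (ξ q) * v (η q) | MeasurableSpace.comap ξ inferInstance]) q) ^ 2 ∂P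
      = ∫ q, (u (ξ q) * v (η q) - G (ξ q)) ^ 2 ∂P :=
    integral_congr_ae (hce.mono fun q hq => by simp only [← hq])
  rw [hrw, hT.integral_eq (fun x y => (u x * v y - G x) ^ 2) hsq]
  congr 1
  have hflip := intervalIntegral.integral_comp_sub_left (a := 0) (b := 1)
    (fun t => u (1 - t) ^ 2 * ((∫ y in (0 : ℝ)..t, v y ^ 2) - V t ^ 2 / t)) 1
  simp only [sub_sub_cancel, sub_self, sub_zero] at hflip
  rw [← hflip]
  congr 1
  funext x
  have hexp : ∀ y, (u x * v y - G x) ^ 2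
      = u x ^ 2 * v y ^ 2 - 2 * u x * G x * v y + G x ^ 2 := fun y => by ring
  simp only [hexp]
  have j1 : IntervalIntegrable (fun y => u x ^ 2 * v y ^ 2) volume 0 (1 - x) :=
    (by fun_prop : Continuous fun y => u x ^ 2 * v y ^ 2).intervalIntegrable _ _
  have j2 : IntervalIntegrable (fun y => 2 * u x * G x * v y) volume 0 (1 - x) :=
    (by fun_prop : Continuous fun y => 2 * u x * G x * v y).intervalIntegrable _ _
  rw [intervalIntegral.integral_add (j1.sub j2) (by simp),
    intervalIntegral.integral_sub j1 j2, intervalIntegral.integral_const_mul,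
    intervalIntegral.integral_const_mul, intervalIntegral.integral_const]
  change _ - 2 * u x * G x * V (1 - x) + _ = _
  by_cases hx : 1 - x = 0
  · simp [hG, hx, hV]
  · simp only [hG, smul_eq_mul]
    field_simp
    ring

theorem integral_mul [IsFiniteMeasure P] (hT : UniformTriangle P ξ η) {u v : ℝ → ℝ}
    (hu : Continuous u) (hv : Continuous v) {M : ℝ}
    (huM : ∀ x ∈ Icc (0 : ℝ) 1, |u x| ≤ M) (hvM : ∀ x ∈ Icc (0 : ℝ) 1, |v x| ≤ M) :
    ∫ q, u (ξ q) * v (η q) ∂P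
      = 2 * ∫ t in (0 : ℝ)..1, u (1 - t) * ∫ y in (0 : ℝ)..t, v y := by
  have hM : 0 ≤ M := (abs_nonneg _).trans (huM 0 (by simp))
  have hum := hu.measurable
  have hvm := hv.measurable
  rw [hT.integral_eq (fun x y => u x * v y) (hT.integrable_of_bound
    (h := fun x y => u x * v y) (by simp only [Function.uncurry_def]; fun_prop) (M * M) ?_)]
  · congr 1
    have hflip := intervalIntegral.integral_comp_sub_left (a := 0) (b := 1)
      (fun t => u (1 - t) * ∫ y in (0 : ℝ)..t, v y) 1
    simp only [sub_sub_cancel, sub_self, sub_zero] at hflip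
    rw [← hflip]
    congr 1
    funext x
    rw [intervalIntegral.integral_const_mul]
  · intro x hx y hy
    rw [abs_mul]
    exact mul_le_mul (huM x hx) (hvM y hy) (abs_nonneg _) hM

end UniformTriangle

/-! ### Evaluation for the g-function -/

theorem factor_flip (t : ℝ) : |4 * (1 - t) - 2| = |4 * t - 2| := by
  rw [← abs_neg]; congr 1; ring

theorem factorA_le {x : ℝ} (hx : x ∈ Icc (0 : ℝ) 1) : |4 * x - 2| ≤ 2 :=
  abs_le.2 ⟨by linarith [hx.1], by linarith [hx.2]⟩

theorem variance_g {P : Measure (ℝ × ℝ)} [IsFiniteMeasure P]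
    (hT : UniformTriangle P Prod.fst Prod.snd) :
    variance (fun q : ℝ × ℝ => |4 * q.1 - 2| * ((|4 * q.2 - 2| + 1) / 2)) P = 4 / 9 := by
  have := hT.isProbabilityMeasure
  have hA := fun x (hx : x ∈ Icc (0 : ℝ) 1) => factorA_le hx
  have hcont : Continuous fun q : ℝ × ℝ => |4 * q.1 - 2| * ((|4 * q.2 - 2| + 1) / 2) := by
    fun_prop
  have hL : MemLp (fun q : ℝ × ℝ => |4 * q.1 - 2| * ((|4 * q.2 - 2| + 1) / 2)) 2 P := by
    refine MemLp.of_bound hcont.aestronglyMeasurable 3 (hT.mem.mono fun q hq => ?_)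
    have h1 := hA _ hq.1
    have h2 := hA _ hq.2
    rw [Real.norm_of_nonneg (by positivity)]
    nlinarith [abs_nonneg (4 * q.1 - 2), abs_nonneg (4 * q.2 - 2)]
  have e1 := hT.integral_mul (u := fun x => |4 * x - 2|) (v := fun y => (|4 * y - 2| + 1) / 2)
    (M := 4) (by fun_prop) (by fun_prop)
    (fun x hx => by rw [abs_abs]; linarith [hA x hx])
    (fun x hx => by rw [abs_of_nonneg (by positivity)]; linarith [hA x hx])
  have e2 := hT.integral_mul (u := fun x => |4 * x - 2| ^ 2)
    (v := fun y => ((|4 * y - 2| + 1) / 2) ^ 2) (M := 4) (by fun_prop) (by fun_prop)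
    (fun x hx => by
      rw [abs_of_nonneg (by positivity)]; nlinarith [hA x hx, abs_nonneg (4 * x - 2)])
    (fun x hx => by
      rw [abs_of_nonneg (by positivity)]; nlinarith [hA x hx, abs_nonneg (4 * x - 2)])
  simp only [factor_flip] at e1 e2
  rw [integral_two_pieces 0 3 (-8) 4 0 0 (-1) 3 (-4) 4 0 0 0 (by norm_num)
    (fun t ht => by rw [abs_left ht.2, primB_left ht.1 ht.2]; ring)
    (fun t ht => by rw [abs_right ht.1, primB_right ht.1]; ring)] at e1
  rw [integral_two_pieces 0 9 (-48) (268 / 3) (-208 / 3) (64 / 3)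
    2 (-7) 0 (76 / 3) (-112 / 3) (64 / 3) 0 (by norm_num)
    (fun t ht => by rw [abs_left ht.2, primB2_left ht.1 ht.2]; ring)
    (fun t ht => by rw [abs_right ht.1, primB2_right ht.1]; ring)] at e2
  rw [variance_eq_sub hL]
  simp only [Pi.pow_apply, mul_pow]
  rw [e1, e2]
  norm_num

theorem total_fst {P : Measure (ℝ × ℝ)} [IsFiniteMeasure P]
    (hT : UniformTriangle P Prod.fst Prod.snd) :
    ∫ q, (|4 * q.1 - 2| * ((|4 * q.2 - 2| + 1) / 2) -
      (P[fun q : ℝ × ℝ => |4 * q.1 - 2| * ((|4 * q.2 - 2| + 1) / 2) |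
        MeasurableSpace.comap Prod.fst inferInstance]) q) ^ 2 ∂P
      = 2 * (133 / 180 - log 2) := by
  have hA := fun x (hx : x ∈ Icc (0 : ℝ) 1) => factorA_le hx
  have e := hT.integral_sub_condExp_sq (u := fun x => |4 * x - 2|)
    (v := fun y => (|4 * y - 2| + 1) / 2)
    (M := 4) (by fun_prop) (by fun_prop)
    (fun x hx => by rw [abs_abs]; linarith [hA x hx])
    (fun x hx => by rw [abs_of_nonneg (by positivity)]; linarith [hA x hx])
  simp only [factor_flip] at e
  rw [integral_two_pieces 0 0 0 (4 / 3) (-16 / 3) (16 / 3)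
    8 (-24) 32 (-44 / 3) (-16 / 3) (16 / 3) (-1) (by norm_num) ?_ ?_] at e
  · rw [e]; norm_num; ring
  · intro t ht
    rw [abs_left ht.2, primB_left ht.1 ht.2, primB2_left ht.1 ht.2]
    rcases eq_or_ne t 0 with rfl | h0
    · norm_num
    · field_simp; ring
  · intro t ht
    have h0 : 0 < t := by linarith [ht.1]
    rw [abs_right ht.1, primB_right ht.1, primB2_right ht.1]
    field_simp; ring

theorem total_snd {P : Measure (ℝ × ℝ)} [IsFiniteMeasure P]
    (hT : UniformTriangle P Prod.snd Prod.fst) :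
    ∫ q, ((|4 * q.2 - 2| + 1) / 2 * |4 * q.1 - 2| -
      (P[fun q : ℝ × ℝ => (|4 * q.2 - 2| + 1) / 2 * |4 * q.1 - 2| |
        MeasurableSpace.comap Prod.snd inferInstance]) q) ^ 2 ∂P
      = 2 * (29 / 90 - 1 / 4 * log 2) := by
  have hA := fun x (hx : x ∈ Icc (0 : ℝ) 1) => factorA_le hx
  have e := hT.integral_sub_condExp_sq (v := fun x => |4 * x - 2|)
    (u := fun y => (|4 * y - 2| + 1) / 2)
    (M := 4) (by fun_prop) (by fun_prop)
    (fun x hx => by rw [abs_of_nonneg (by positivity)]; linarith [hA x hx])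
    (fun x hx => by rw [abs_abs]; linarith [hA x hx])
  simp only [factor_flip] at e
  rw [integral_two_pieces 0 0 0 3 (-8) (16 / 3)
    3 (-13) 24 (-47 / 3) (-8 / 3) (16 / 3) (-1 / 4) (by norm_num) ?_ ?_] at e
  · rw [e]; norm_num; ring
  · intro t ht
    rw [abs_left ht.2, primA_left ht.1 ht.2, primA2 ht.1]
    rcases eq_or_ne t 0 with rfl | h0
    · norm_num
    · field_simp; ring
  · intro t ht
    have h0 : 0 < t := by linarith [ht.1]
    rw [abs_right ht.1, primA_right ht.1, primA2 h0.le]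
    field_simp; ring

/-- For the 2D g-function `f(x₁,x₂) = |4x₁−2|·(|4x₂−2|+1)/2` with `(X₁,X₂)` uniformly
distributed on the lower triangle `Ω₂ = {(x₁,x₂) ∈ [0,1]² : x₁ + x₂ ≤ 1}`, the total effect
Sobol' indices are `S^T_{x₁} = E[Var(f | X₂)]/Var(f) = E[(f − E[f|X₂])²]/Var(f)
= 29/20 − (9/8)·ln 2` and `S^T_{x₂} = E[Var(f | X₁)]/Var(f) = 133/40 − (9/2)·ln 2`. -/
theorem total_effects_g_function_lower_triangle
    (Ω₂ : Set (ℝ × ℝ))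
    (hΩ₂ : Ω₂ = {q : ℝ × ℝ | q.1 ∈ Icc (0 : ℝ) 1 ∧ q.2 ∈ Icc (0 : ℝ) 1 ∧ q.1 + q.2 ≤ 1})
    (P : Measure (ℝ × ℝ)) (hP : P = (2 : ENNReal) • volume.restrict Ω₂)
    (f : ℝ × ℝ → ℝ) (hf : f = fun q => |4 * q.1 - 2| * (|4 * q.2 - 2| + 1) / 2) :
    (∫ q, (f q - (P[f | MeasurableSpace.comap Prod.snd inferInstance]) q) ^ 2 ∂P)
        / variance f P = 29 / 20 - (9 / 8) * Real.log 2
      ∧ (∫ q, (f q - (P[f | MeasurableSpace.comap Prod.fst inferInstance]) q) ^ 2 ∂P)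
          / variance f P = 133 / 40 - (9 / 2) * Real.log 2 := by
  subst hΩ₂
  have hfin : volume {q : ℝ × ℝ | q.1 ∈ Icc (0 : ℝ) 1 ∧ q.2 ∈ Icc (0 : ℝ) 1 ∧
      q.1 + q.2 ≤ 1} ≠ ⊤ := by
    refine ((measure_mono (t := Icc (0 : ℝ) 1 ×ˢ Icc (0 : ℝ) 1)
      fun q hq => ⟨hq.1, hq.2.1⟩).trans_lt ?_).ne
    exact (isCompact_Icc.prod isCompact_Icc).measure_lt_top
  have hPfin : IsFiniteMeasure P := by
    refine ⟨?_⟩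
    rw [hP, Measure.smul_apply, Measure.restrict_apply_univ, smul_eq_mul]
    exact ENNReal.mul_lt_top (by norm_num) hfin.lt_top
  have h1 : UniformTriangle P Prod.fst Prod.snd := hP ▸ uniformTriangle_fst
  have h2 : UniformTriangle P Prod.snd Prod.fst := hP ▸ uniformTriangle_snd
  have hf1 : f = fun q => |4 * q.1 - 2| * ((|4 * q.2 - 2| + 1) / 2) := by
    rw [hf]; funext q; ring
  have hf2 : f = fun q => (|4 * q.2 - 2| + 1) / 2 * |4 * q.1 - 2| := by
    rw [hf]; funext q; ring
  have hvar : variance f P = 4 / 9 := by rw [hf1]; exact variance_g h1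
  rw [hvar]
  constructor
  · rw [hf2, total_snd h2]; ring
  · rw [hf1, total_fst h1]; ring
end

section
/- Let P be the uniform probability measure on the region Ω = {(x₁, x₂) ∈ [0,1]² : x₂ ≥ 4x₁(1 − x₁)} above the parabola x₂ = 4x₁(1 − x₁) within the unit square (density 3 on Ω), and let f(x₁, x₂) = |4x₁ − 2| · (|4x₂ − 2| + 1)/2. Then the total variance of f is D = Var_P(f) = 521/1260 − (4/35)·√2. -/
/-!
Put `t = 2 x₁ - 1` and `s = t²`. The parabola becomes `x₂ = 1 - s`, and `f = |t| (|4 x₂ - 2| + 1)`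
is even in `t`. Hence, for every `n`,
`∫_Ω |4x₁ - 2|ⁿ (|4x₂ - 2| + 1)ⁿ = ∫_0^1 (2t)ⁿ Aₙ(t²) dt`, where
`Aₙ(s) = ∫_{1-s}^1 (|4y - 2| + 1)ⁿ dy` is given by one polynomial for `s ≤ 1/2` and by another for
`s ≥ 1/2` (`inner_integral_low`, `inner_integral_high`). The case `n = 0`, where `A₀(s) = s`, shows
that `Ω` has area `1/3`. Splitting the outer integral at `t = √2/2`, the cases `n = 1, 2` give, up to
constant factors, the mean and the second moment of `f`; the variance is the second moment minus the
squared mean. The irrational term comes from the split point.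
-/

open MeasureTheory ProbabilityTheory Set

/-- The slice integral `∫_{1-s}^1 (|4y - 2| + 1)ⁿ dy`. -/
noncomputable def sliceIntegral (n : ℕ) (s : ℝ) : ℝ :=
  ∫ y in (1 - s)..1, (|4 * y - 2| + 1) ^ n

lemma inner_integral_low (n : ℕ) {s : ℝ} (h0 : 0 ≤ s) (h : s ≤ 1 / 2) :
    sliceIntegral n s = (3 ^ (n + 1) - (3 - 4 * s) ^ (n + 1)) / (4 * (n + 1)) := by
  have h1 : sliceIntegral n s = ∫ y in (1 - s)..1, (4 * y - 1) ^ n := by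
    refine intervalIntegral.integral_congr fun y hy => ?_
    rw [uIcc_of_le (by linarith)] at hy
    rw [abs_of_nonneg (by linarith [hy.1])]
    ring
  rw [h1, intervalIntegral.integral_comp_mul_sub (fun u => u ^ n) (by norm_num : (4 : ℝ) ≠ 0),
    integral_pow, smul_eq_mul]
  field_simp
  ring_nf

lemma inner_integral_high (n : ℕ) {s : ℝ} (h : 1 / 2 ≤ s) :
    sliceIntegral n s = (3 ^ (n + 1) - 2 + (4 * s - 1) ^ (n + 1)) / (4 * (n + 1)) := by
  have hc : Continuous fun y : ℝ => (|4 * y - 2| + 1) ^ n := by fun_prop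
  have h1 : ∫ y in (1 - s)..(1 / 2), (|4 * y - 2| + 1) ^ n
      = ∫ y in (1 - s)..(1 / 2), (3 - 4 * y) ^ n := by
    refine intervalIntegral.integral_congr fun y hy => ?_
    rw [uIcc_of_le (by linarith)] at hy
    rw [abs_of_nonpos (by linarith [hy.2])]
    ring
  have h2 := inner_integral_low n (s := 1 / 2) (by norm_num) le_rfl
  rw [sliceIntegral, show (1 : ℝ) - 1 / 2 = 1 / 2 by norm_num] at h2
  rw [sliceIntegral, ← intervalIntegral.integral_add_adjacent_intervals
    (hc.intervalIntegrable _ (1 / 2)) (hc.intervalIntegrable _ _), h2, h1,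
    intervalIntegral.integral_comp_sub_mul (fun u => u ^ n) (by norm_num : (4 : ℝ) ≠ 0),
    integral_pow, smul_eq_mul]
  have e1 : (3 : ℝ) - 4 * (1 / 2) = 1 := by norm_num
  have e2 : (3 : ℝ) - 4 * (1 - s) = 4 * s - 1 := by ring
  rw [e1, e2]
  field_simp
  ring

lemma continuous_sliceIntegral (n : ℕ) : Continuous (sliceIntegral n) := by
  have hc : Continuous fun y : ℝ => (|4 * y - 2| + 1) ^ n := by fun_prop
  have h : sliceIntegral n = fun s => -∫ y in (1 : ℝ)..(1 - s), (|4 * y - 2| + 1) ^ n := by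
    funext s
    rw [sliceIntegral, intervalIntegral.integral_symm]
  rw [h]
  exact ((intervalIntegral.continuous_primitive (fun a b => hc.intervalIntegrable a b) 1).comp
    (by fun_prop : Continuous fun s : ℝ => 1 - s)).neg

/-- The region of the unit square above the parabola `x₂ = 4x₁(1 - x₁)`. -/
def parabolicRegion : Set (ℝ × ℝ) :=
  {q : ℝ × ℝ | q.1 ∈ Icc (0 : ℝ) 1 ∧ q.2 ∈ Icc (0 : ℝ) 1 ∧ 4 * q.1 * (1 - q.1) ≤ q.2}

lemma isCompact_parabolicRegion : IsCompact parabolicRegion := by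
  have h : parabolicRegion
      = (Icc (0 : ℝ) 1 ×ˢ Icc (0 : ℝ) 1) ∩ {q : ℝ × ℝ | 4 * q.1 * (1 - q.1) ≤ q.2} := by
    ext q
    simp only [parabolicRegion, mem_ofPred_eq, mem_inter_iff, mem_prod, and_assoc]
  rw [h]
  exact (isCompact_Icc.prod isCompact_Icc).inter_right
    (isClosed_le (by fun_prop) (by fun_prop))

/-- Fubini on the region, followed by the substitution `t = 2x₁ - 1` and evenness in `t`. -/
lemma integral_region (n : ℕ) :
    ∫ q in parabolicRegion, |4 * q.1 - 2| ^ n * (|4 * q.2 - 2| + 1) ^ n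
      = ∫ t in (0 : ℝ)..1, (2 * t) ^ n * sliceIntegral n (t ^ 2) := by
  set F : ℝ × ℝ → ℝ := fun q => |4 * q.1 - 2| ^ n * (|4 * q.2 - 2| + 1) ^ n with hF
  have hFc : Continuous F := by fun_prop
  have hm : MeasurableSet parabolicRegion := isCompact_parabolicRegion.measurableSet
  have hint : Integrable (parabolicRegion.indicator F) (volume.prod volume) :=
    (integrable_indicator_iff hm).2
      (hFc.continuousOn.integrableOn_compact isCompact_parabolicRegion)
  set φ : ℝ → ℝ := fun t => (2 * |t|) ^ n * sliceIntegral n (t ^ 2) with hφ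
  have hφc : Continuous φ := by
    have := continuous_sliceIntegral n
    fun_prop
  have hslice : ∀ x, ∫ y, parabolicRegion.indicator F (x, y)
      = (Icc (0 : ℝ) 1).indicator (fun x => φ (2 * x - 1)) x := by
    intro x
    by_cases hx : x ∈ Icc (0 : ℝ) 1
    · have hx0 : 0 ≤ 4 * x * (1 - x) := by nlinarith [hx.1, hx.2]
      have e : (fun y => parabolicRegion.indicator F (x, y))
          = (Icc (4 * x * (1 - x)) 1).indicator fun y => F (x, y) := by
        funext y
        have : (x, y) ∈ parabolicRegion ↔ y ∈ Icc (4 * x * (1 - x)) 1 :=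
          ⟨fun h => ⟨h.2.2, h.2.1.2⟩, fun h => ⟨hx, ⟨hx0.trans h.1, h.2⟩, h.1⟩⟩
        simp only [indicator, this]
      rw [e, integral_indicator measurableSet_Icc, integral_Icc_eq_integral_Ioc,
        ← intervalIntegral.integral_of_le (by nlinarith [sq_nonneg (2 * x - 1)]),
        indicator_of_mem hx]
      have e2 : 2 * |2 * x - 1| = |4 * x - 2| := by
        rw [show 4 * x - 2 = 2 * (2 * x - 1) by ring, abs_mul, abs_two]
      simp only [hF, hφ, sliceIntegral, e2, intervalIntegral.integral_const_mul]
      rw [show 1 - (2 * x - 1) ^ 2 = 4 * x * (1 - x) by ring]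
    · have e : (fun y => parabolicRegion.indicator F (x, y)) = fun _ => 0 := by
        funext y
        exact indicator_of_notMem (fun h => hx h.1) _
      rw [e, indicator_of_notMem hx, integral_zero]
  have hneg : ∫ t in (-1 : ℝ)..0, φ t = ∫ t in (0 : ℝ)..1, φ t := by
    have h := intervalIntegral.integral_comp_neg (a := (-1 : ℝ)) (b := 0) φ
    have he : ∀ t, φ (-t) = φ t := fun t => by simp [hφ]
    simpa only [he, neg_neg, neg_zero] using h
  have hpos : ∫ t in (0 : ℝ)..1, φ t
      = ∫ t in (0 : ℝ)..1, (2 * t) ^ n * sliceIntegral n (t ^ 2) := by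
    refine intervalIntegral.integral_congr fun t ht => ?_
    rw [uIcc_of_le zero_le_one] at ht
    simp only [hφ, abs_of_nonneg ht.1]
  rw [← integral_indicator hm, Measure.volume_eq_prod, integral_prod _ hint]
  simp only [hslice]
  rw [integral_indicator measurableSet_Icc, integral_Icc_eq_integral_Ioc,
    ← intervalIntegral.integral_of_le zero_le_one,
    intervalIntegral.integral_comp_mul_sub φ (by norm_num : (2 : ℝ) ≠ 0)]
  norm_num
  rw [← intervalIntegral.integral_add_adjacent_intervals
    (hφc.intervalIntegrable (-1) 0) (hφc.intervalIntegrable 0 1), hneg, hpos]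
  ring

lemma sqrt_two_div_two_sq : (√2 / 2) ^ 2 = 1 / 2 := by
  rw [div_pow, Real.sq_sqrt zero_le_two]
  norm_num

/-- The integral over the region, split at `t = √2/2`, with polynomial integrands. -/
lemma integral_region_split (n : ℕ) :
    ∫ q in parabolicRegion, |4 * q.1 - 2| ^ n * (|4 * q.2 - 2| + 1) ^ n
      = (∫ t in (0 : ℝ)..(√2 / 2),
          (2 * t) ^ n * ((3 ^ (n + 1) - (3 - 4 * t ^ 2) ^ (n + 1)) / (4 * (n + 1))))
        + ∫ t in (√2 / 2)..1,
          (2 * t) ^ n * ((3 ^ (n + 1) - 2 + (4 * t ^ 2 - 1) ^ (n + 1)) / (4 * (n + 1))) := by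
  have hr0 : 0 ≤ √2 / 2 := by positivity
  have hr2 := sqrt_two_div_two_sq
  have hr1 : √2 / 2 ≤ 1 := by nlinarith
  have hc : Continuous fun t : ℝ => (2 * t) ^ n * sliceIntegral n (t ^ 2) := by
    have := continuous_sliceIntegral n
    fun_prop
  rw [integral_region, ← intervalIntegral.integral_add_adjacent_intervals
    (hc.intervalIntegrable 0 (√2 / 2)) (hc.intervalIntegrable _ _)]
  congr 1
  · refine intervalIntegral.integral_congr fun t ht => ?_
    rw [uIcc_of_le hr0] at ht
    rw [inner_integral_low n (sq_nonneg t) (by nlinarith [ht.1, ht.2])]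
  · refine intervalIntegral.integral_congr fun t ht => ?_
    rw [uIcc_of_le hr1] at ht
    rw [inner_integral_high n (by nlinarith [ht.1, ht.2])]

lemma integral_poly_eq {g G : ℝ → ℝ} (hg : Continuous g) (h : ∀ t, HasDerivAt G (g t) t)
    (a b : ℝ) : ∫ t in a..b, g t = G b - G a :=
  intervalIntegral.integral_eq_sub_of_hasDerivAt (fun t _ => h t) (hg.intervalIntegrable a b)

lemma integral_region_zero : ∫ _ in parabolicRegion, (1 : ℝ) = 1 / 3 := by
  have h := integral_region 0
  have hs : ∀ s, sliceIntegral 0 s = s := fun s => by simp [sliceIntegral]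
  simp only [pow_zero, one_mul, hs, integral_pow] at h
  rw [h]
  norm_num

lemma integral_region_one :
    ∫ q in parabolicRegion, |4 * q.1 - 2| * (|4 * q.2 - 2| + 1) = 1 := by
  have h := integral_region_split 1
  rw [integral_poly_eq (G := fun t => 3 / 2 * t ^ 4 - 2 / 3 * t ^ 6) (by fun_prop)
      fun t => (((hasDerivAt_pow 4 t).const_mul (3 / 2)).sub
        ((hasDerivAt_pow 6 t).const_mul (2 / 3))).congr_deriv (by norm_num; ring),
    integral_poly_eq (G := fun t => t ^ 2 - 1 / 2 * t ^ 4 + 2 / 3 * t ^ 6) (by fun_prop)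
      fun t => (((hasDerivAt_pow 2 t).sub ((hasDerivAt_pow 4 t).const_mul (1 / 2))).add
        ((hasDerivAt_pow 6 t).const_mul (2 / 3))).congr_deriv (by norm_num; ring)] at h
  simp only [pow_one] at h
  rw [h]
  have hr2 := sqrt_two_div_two_sq
  generalize √2 / 2 = r at hr2
  have h4 : r ^ 4 = 1 / 4 := by rw [show r ^ 4 = (r ^ 2) ^ 2 by ring, hr2]; norm_num
  have h6 : r ^ 6 = 1 / 8 := by rw [show r ^ 6 = (r ^ 2) ^ 3 by ring, hr2]; norm_num
  rw [h4, h6, hr2]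
  norm_num

lemma integral_region_two :
    ∫ q in parabolicRegion, |4 * q.1 - 2| ^ 2 * (|4 * q.2 - 2| + 1) ^ 2
      = 3356 / 945 - 16 / 105 * √2 := by
  have h := integral_region_split 2
  rw [integral_poly_eq (G := fun t => 36 / 5 * t ^ 5 - 48 / 7 * t ^ 7 + 64 / 27 * t ^ 9)
      (by fun_prop)
      fun t => ((((hasDerivAt_pow 5 t).const_mul (36 / 5)).sub
        ((hasDerivAt_pow 7 t).const_mul (48 / 7))).add
        ((hasDerivAt_pow 9 t).const_mul (64 / 27))).congr_deriv (by norm_num; ring),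
    integral_poly_eq
      (G := fun t => 8 / 3 * t ^ 3 + 4 / 5 * t ^ 5 - 16 / 7 * t ^ 7 + 64 / 27 * t ^ 9)
      (by fun_prop)
      fun t => (((((hasDerivAt_pow 3 t).const_mul (8 / 3)).add
        ((hasDerivAt_pow 5 t).const_mul (4 / 5))).sub
        ((hasDerivAt_pow 7 t).const_mul (16 / 7))).add
        ((hasDerivAt_pow 9 t).const_mul (64 / 27))).congr_deriv (by norm_num; ring)] at h
  rw [h]
  have hr2 := sqrt_two_div_two_sq
  rw [show 16 / 105 * √2 = 32 / 105 * (√2 / 2) by ring]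
  generalize √2 / 2 = r at hr2
  have h3 : r ^ 3 = r / 2 := by rw [show r ^ 3 = r ^ 2 * r by ring, hr2]; ring
  have h5 : r ^ 5 = r / 4 := by rw [show r ^ 5 = (r ^ 2) ^ 2 * r by ring, hr2]; ring
  have h7 : r ^ 7 = r / 8 := by rw [show r ^ 7 = (r ^ 2) ^ 3 * r by ring, hr2]; ring
  have h9 : r ^ 9 = r / 16 := by rw [show r ^ 9 = (r ^ 2) ^ 4 * r by ring, hr2]; ring
  simp only [h3, h5, h7, h9]
  ring

/-- For the uniform probability measure on the region above the parabola,
`Ω = {(x₁,x₂) ∈ [0,1]² : x₂ ≥ 4x₁(1−x₁)}` (density 3 on `Ω`), the total variance of the 2D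
g-function `f(x₁,x₂) = |4x₁−2|·(|4x₂−2|+1)/2` is `521/1260 − (4/35)·√2`. -/
theorem variance_g_function_parabolic_region
    (Ω : Set (ℝ × ℝ))
    (hΩ : Ω = {q : ℝ × ℝ | q.1 ∈ Icc (0 : ℝ) 1 ∧ q.2 ∈ Icc (0 : ℝ) 1
        ∧ 4 * q.1 * (1 - q.1) ≤ q.2})
    (P : Measure (ℝ × ℝ)) (hP : P = (3 : ENNReal) • volume.restrict Ω)
    (f : ℝ × ℝ → ℝ) (hf : f = fun q => |4 * q.1 - 2| * (|4 * q.2 - 2| + 1) / 2) :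
    variance f P = 521 / 1260 - (4 / 35) * Real.sqrt 2 := by
  change Ω = parabolicRegion at hΩ
  subst hΩ
  have hfc : Continuous f := by rw [hf]; fun_prop
  have hvol : volume parabolicRegion = ENNReal.ofReal (1 / 3) := by
    have h := integral_region_zero
    rw [setIntegral_const, smul_eq_mul, mul_one] at h
    rw [← h, measureReal_def, ENNReal.ofReal_toReal isCompact_parabolicRegion.measure_ne_top]
  have hprob : IsProbabilityMeasure P := ⟨by
    rw [hP, Measure.smul_apply, Measure.restrict_apply_univ, hvol, smul_eq_mul,
      show (3 : ENNReal) = ENNReal.ofReal 3 by simp, ← ENNReal.ofReal_mul (by norm_num)]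
    norm_num⟩
  have hmem : MemLp f 2 P := by
    rw [memLp_two_iff_integrable_sq hfc.aestronglyMeasurable, hP]
    exact Integrable.smul_measure
      ((hfc.pow 2).continuousOn.integrableOn_compact isCompact_parabolicRegion) (by simp)
  have h1 : ∫ q, f q ∂P = 3 / 2 := by
    rw [hP, integral_smul_measure, hf, integral_div, integral_region_one]
    norm_num
  have h2 : ∫ q, (f ^ 2) q ∂P = 839 / 315 - 4 / 35 * √2 := by
    have e : f ^ 2 = fun q => (|4 * q.1 - 2| ^ 2 * (|4 * q.2 - 2| + 1) ^ 2) / 4 := by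
      funext q
      simp only [hf, Pi.pow_apply]
      ring
    rw [hP, integral_smul_measure, e, integral_div, integral_region_two, smul_eq_mul]
    norm_num
    ring
  rw [variance_eq_sub hmem, h1, h2]
  ring
end

section
/- Let n ≥ 1, let X₁, …, X_n be independent random variables each uniformly distributed on [0,1], and let K(X) = Σ_{i=1}^{n} (−1)^i ∏_{j=1}^{i} X_j. Then for every i ∈ {1, …, n} the main effect Sobol' index of X_i, namely S_i = Var( E[K | X_i] ) / Var(K), is given by S_i = [ (1/2)^{2i−2} + (−1/2)^{n+i−2} + (1/2)^{2n} ] / [ 3/2 − (3/5)(−1)^n (1/2)^{n−1} + (1/10)(1/3)^{n−3} − 3(1/2)^{2n} ]. -/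
/-!
The variances in the numerator and in the denominator are computed separately.

*Denominator.* Writing `K_{n+1}(x) = -x₀ (1 + K_n(x₁, …, x_n))` and using Fubini, the first two
moments satisfy `m_{n+1} = -(1 + m_n) / 2` and `s_{n+1} = (1 + 2 m_n + s_n) / 3`
(`integral_kFun_succ`, `integral_kFun_sq_succ`). Solving these linear recursions gives
`Var K = s_n - m_n ^ 2`, which is `1/27` of the denominator in the claim (`variance_kFun`).

*Numerator.* By independence, `E[∏_{j ≤ k} X_j | X_i]` is `X_i / 2 ^ k` when `i ≤ k` and a constant
otherwise (`condExp_monomial`). So `E[K | X_i] = c + b X_i` almost surely, where `b` is a geometric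
sum (`sum_slope`), and its variance `b ^ 2 / 12` is `1/27` of the numerator in the claim.
-/

open MeasureTheory ProbabilityTheory Set

namespace KFunction

/-- The uniform distribution on `[0,1]`. -/
noncomputable abbrev unif : Measure ℝ := volume.restrict (Icc (0 : ℝ) 1)

/-- The uniform distribution on the cube `[0,1]^n`. -/
noncomputable abbrev cube (n : ℕ) : Measure (Fin n → ℝ) := Measure.pi fun _ => unif

/-- The K-function, with inputs indexed from `0`. -/
noncomputable def kFun (n : ℕ) (x : Fin n → ℝ) : ℝ :=
  ∑ i : Fin n, (-1 : ℝ) ^ ((i : ℕ) + 1) * ∏ j ∈ Finset.Iic i, x j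

instance : IsProbabilityMeasure unif := ⟨by simp [unif]⟩

lemma integral_unif_pow (k : ℕ) : ∫ x, x ^ k ∂unif = 1 / (k + 1) := by
  rw [integral_Icc_eq_integral_Ioc, ← intervalIntegral.integral_of_le zero_le_one]
  simp [integral_pow]

lemma integral_unif_id : ∫ x, x ∂unif = 1 / 2 := by
  have := integral_unif_pow 1
  norm_num at this ⊢
  exact this

lemma integral_unif_sq : ∫ x, x ^ 2 ∂unif = 1 / 3 := by
  have := integral_unif_pow 2
  norm_num at this ⊢
  exact this

/-- The cube measure is Lebesgue measure restricted to a compact set. -/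
lemma integrable_of_continuous {n : ℕ} {f : (Fin n → ℝ) → ℝ} (hf : Continuous f) :
    Integrable f (cube n) := by
  have h : cube n = (volume : Measure (Fin n → ℝ)).restrict (univ.pi fun _ => Icc (0 : ℝ) 1) := by
    rw [volume_pi, Measure.restrict_pi_pi]
  rw [h]
  exact hf.continuousOn.integrableOn_compact (isCompact_univ_pi fun _ => isCompact_Icc)

lemma memLp_two_of_continuous {n : ℕ} {f : (Fin n → ℝ) → ℝ} (hf : Continuous f) :
    MemLp f 2 (cube n) :=
  (memLp_two_iff_integrable_sq hf.aestronglyMeasurable).2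
    (integrable_of_continuous (hf.pow 2))

lemma continuous_kFun (n : ℕ) : Continuous (kFun n) := by
  unfold kFun
  fun_prop

lemma kFun_cons (n : ℕ) (a : ℝ) (y : Fin n → ℝ) :
    kFun (n + 1) (Fin.cons a y) = -(a * (1 + kFun n y)) := by
  have h0 : Finset.Iic (0 : Fin (n + 1)) = {0} := by
    ext j; simp
  have hs (i : Fin n) : ∏ j ∈ Finset.Iic i.succ, (Fin.cons a y : Fin (n + 1) → ℝ) j
      = a * ∏ j ∈ Finset.Iic i, y j := by
    have : Finset.Iic i.succ = insert 0 ((Finset.Iic i).map (Fin.succEmb n)) := by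
      rw [Fin.map_succEmb_Iic]
      ext j
      simp only [Finset.mem_Iic, Finset.mem_insert, Finset.mem_Ioc, Fin.pos_iff_ne_zero]
      constructor
      · intro h
        by_cases hj : j = 0
        · exact Or.inl hj
        · exact Or.inr ⟨hj, h⟩
      · rintro (rfl | h)
        · exact Fin.zero_le _
        · exact h.2
    rw [this, Finset.prod_insert (by simp), Finset.prod_map]
    simp
  unfold kFun
  rw [Fin.sum_univ_succ, h0]
  simp only [hs, Finset.prod_singleton, Fin.cons_zero, Fin.val_succ, Fin.val_zero]
  rw [mul_add, Finset.mul_sum, neg_add, ← Finset.sum_neg_distrib]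
  congr 1
  · ring
  · exact Finset.sum_congr rfl fun i _ => by ring

/-- Fubini for integrands that separate the first coordinate from the others. -/
lemma integral_cube_succ {n : ℕ} {F : (Fin (n + 1) → ℝ) → ℝ} {f : ℝ → ℝ} {g : (Fin n → ℝ) → ℝ}
    (h : ∀ a y, F (Fin.cons a y) = f a * g y) :
    ∫ x, F x ∂cube (n + 1) = (∫ a, f a ∂unif) * ∫ y, g y ∂cube n := by
  rw [← integral_prod_mul f g,
    ← ((measurePreserving_piFinSuccAbove (fun _ : Fin (n + 1) => unif) 0).symm).integral_comp']
  refine integral_congr_ae (Filter.Eventually.of_forall fun z => ?_)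
  simp only [← h]
  congr 1
  exact Fin.insertNth_zero' z.1 z.2

lemma integral_kFun_succ (n : ℕ) :
    ∫ x, kFun (n + 1) x ∂cube (n + 1) = -(1 + ∫ y, kFun n y ∂cube n) / 2 := by
  rw [integral_cube_succ (f := fun a => a) (g := fun y => -(1 + kFun n y))
    (fun a y => by rw [kFun_cons]; ring), integral_unif_id, integral_neg,
    integral_add (integrable_const _) (integrable_of_continuous (continuous_kFun n))]
  simp
  ring

lemma integral_kFun_sq_succ (n : ℕ) :
    ∫ x, kFun (n + 1) x ^ 2 ∂cube (n + 1)
      = (1 + 2 * ∫ y, kFun n y ∂cube n + ∫ y, kFun n y ^ 2 ∂cube n) / 3 := by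
  have hc := continuous_kFun n
  rw [integral_cube_succ (f := fun a => a ^ 2)
    (g := fun y => (1 + 2 * kFun n y) + kFun n y ^ 2)
    (fun a y => by rw [kFun_cons]; ring), integral_unif_sq,
    integral_add (integrable_of_continuous (by fun_prop)) (integrable_of_continuous (by fun_prop)),
    integral_add (integrable_const _) (integrable_of_continuous (by fun_prop)),
    integral_const_mul]
  simp
  ring

lemma integral_kFun (n : ℕ) :
    ∫ x, kFun n x ∂cube n = -1 / 3 + 1 / 3 * (-(1 / 2)) ^ n := by
  induction n with
  | zero => simp [kFun]; norm_num
  | succ n ih => rw [integral_kFun_succ, ih]; ring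

lemma integral_kFun_sq (n : ℕ) :
    ∫ x, kFun n x ^ 2 ∂cube n
      = 1 / 6 - 4 / 15 * (-(1 / 2)) ^ n + 1 / 10 * (1 / 3) ^ n := by
  induction n with
  | zero => simp [kFun]; norm_num
  | succ n ih => rw [integral_kFun_sq_succ, ih, integral_kFun]; ring

lemma variance_kFun (n : ℕ) :
    variance (kFun n) (cube n)
      = 1 / 6 - 4 / 15 * (-(1 / 2)) ^ n + 1 / 10 * (1 / 3) ^ n
        - (-1 / 3 + 1 / 3 * (-(1 / 2)) ^ n) ^ 2 := by
  rw [variance_eq_sub (memLp_two_of_continuous (continuous_kFun n)), ← integral_kFun_sq,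
    ← integral_kFun]
  simp

lemma variance_coord {n : ℕ} (i : Fin n) : variance (fun x => x i) (cube n) = 1 / 12 := by
  have hmp := measurePreserving_eval (fun _ : Fin n => unif) i
  have h1 : ∫ x, x i ∂cube n = 1 / 2 := by
    rw [← integral_unif_id, ← hmp.map_eq,
      integral_map hmp.measurable.aemeasurable (by fun_prop)]
  have h2 : ∫ x, x i ^ 2 ∂cube n = 1 / 3 := by
    rw [← integral_unif_sq, ← hmp.map_eq,
      integral_map hmp.measurable.aemeasurable (by fun_prop)]
  rw [variance_eq_sub (memLp_two_of_continuous (continuous_apply i))]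
  simp only [Pi.pow_apply]
  rw [h1, h2]
  norm_num

lemma integral_prod_coord {n : ℕ} (s : Finset (Fin n)) :
    ∫ x, ∏ j ∈ s, x j ∂cube n = (1 / 2) ^ s.card := by
  have h := integral_fintype_prod_eq_prod (𝕜 := ℝ)
    (fun (j : Fin n) (t : ℝ) => if j ∈ s then t else 1) (μ := fun _ => unif)
  have h1 (j : Fin n) : ∫ t, (if j ∈ s then t else 1) ∂unif = if j ∈ s then 1 / 2 else 1 := by
    split_ifs
    · exact integral_unif_id
    · simp
  simp only [h1, Finset.prod_ite_mem, Finset.univ_inter, Finset.prod_const] at h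
  exact h

lemma comap_coord_le {n : ℕ} (i : Fin n) :
    MeasurableSpace.comap (fun x : Fin n → ℝ => x i) inferInstance ≤ MeasurableSpace.pi :=
  (measurable_pi_apply i).comap_le

/-- A product of coordinates other than `i` is independent of `X_i`. -/
lemma condExp_prod_of_notMem {n : ℕ} (i : Fin n) {s : Finset (Fin n)} (hi : i ∉ s) :
    (cube n)[fun x => ∏ j ∈ s, x j | MeasurableSpace.comap (fun x => x i) inferInstance]
      =ᵐ[cube n] fun _ => (1 / 2) ^ s.card := by
  have hind : iIndepFun (fun (j : Fin n) (x : Fin n → ℝ) => x j) (cube n) :=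
    iIndepFun_pi (X := fun _ t => t) fun _ => aemeasurable_id
  have h := hind.indepFun_finsetProd_of_notMem (fun j => measurable_pi_apply j) hi
  have he : (∏ j ∈ s, fun x : Fin n → ℝ => x j) = fun x => ∏ j ∈ s, x j := by
    ext x; simp
  rw [he] at h
  have hm : Measurable fun x : Fin n → ℝ => ∏ j ∈ s, x j := by fun_prop
  rw [← integral_prod_coord s]
  exact condExp_indep_eq hm.comap_le (comap_coord_le i)
    (comap_measurable _).stronglyMeasurable ((IndepFun_iff_Indep _ _ _).1 h)

lemma condExp_monomial {n : ℕ} (i k : Fin n) :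
    (cube n)[fun x => ∏ j ∈ Finset.Iic k, x j |
        MeasurableSpace.comap (fun x => x i) inferInstance]
      =ᵐ[cube n] fun x => if i ≤ k then x i * (1 / 2) ^ (k : ℕ) else (1 / 2) ^ ((k : ℕ) + 1) := by
  by_cases hik : i ≤ k
  · have hmem : i ∈ Finset.Iic k := Finset.mem_Iic.2 hik
    have he : (fun x : Fin n → ℝ => ∏ j ∈ Finset.Iic k, x j)
        = (fun x => x i) * fun x => ∏ j ∈ (Finset.Iic k).erase i, x j := by
      ext x
      exact (Finset.mul_prod_erase _ _ hmem).symm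
    have h1 := condExp_mul_of_stronglyMeasurable_left (μ := cube n)
      (m := MeasurableSpace.comap (fun x : Fin n → ℝ => x i) inferInstance)
      (f := fun x => x i) (g := fun x => ∏ j ∈ (Finset.Iic k).erase i, x j)
      (comap_measurable _).stronglyMeasurable
      (integrable_of_continuous (by fun_prop)) (integrable_of_continuous (by fun_prop))
    rw [he]
    filter_upwards [h1, condExp_prod_of_notMem i (Finset.notMem_erase i (Finset.Iic k))]
      with x hx1 hx2
    rw [hx1, Pi.mul_apply, hx2, if_pos hik, Finset.card_erase_of_mem hmem, Fin.card_Iic,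
      Nat.add_sub_cancel]
  · have h := condExp_prod_of_notMem i (s := Finset.Iic k) (by simpa using hik)
    simpa only [if_neg hik, Fin.card_Iic] using h

/-- `E[K | X_i]` is affine in `X_i`. -/
lemma condExp_kFun {n : ℕ} (i : Fin n) :
    ∃ c : ℝ, (cube n)[kFun n | MeasurableSpace.comap (fun x => x i) inferInstance]
      =ᵐ[cube n] fun x => c
        + (∑ k : Fin n, if i ≤ k then (-1 : ℝ) ^ ((k : ℕ) + 1) * (1 / 2) ^ (k : ℕ) else 0) * x i := by
  refine ⟨∑ k : Fin n, if i ≤ k then 0 else (-1 : ℝ) ^ ((k : ℕ) + 1) * (1 / 2) ^ ((k : ℕ) + 1), ?_⟩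
  have he : kFun n = ∑ k : Fin n,
      (-1 : ℝ) ^ ((k : ℕ) + 1) • fun x : Fin n → ℝ => ∏ j ∈ Finset.Iic k, x j := by
    ext x
    simp [kFun]
  have hsum := condExp_finsetSum (μ := cube n) (s := Finset.univ)
    (f := fun k : Fin n => (-1 : ℝ) ^ ((k : ℕ) + 1) • fun x : Fin n → ℝ => ∏ j ∈ Finset.Iic k, x j)
    (fun k _ => (integrable_of_continuous (by fun_prop)).smul _)
    (MeasurableSpace.comap (fun x => x i) inferInstance)
  have hterm : ∀ᵐ x ∂cube n, ∀ k : Fin n,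
      ((cube n)[(-1 : ℝ) ^ ((k : ℕ) + 1) • fun x : Fin n → ℝ => ∏ j ∈ Finset.Iic k, x j |
        MeasurableSpace.comap (fun x => x i) inferInstance]) x
      = (-1 : ℝ) ^ ((k : ℕ) + 1) *
        if i ≤ k then x i * (1 / 2) ^ (k : ℕ) else (1 / 2) ^ ((k : ℕ) + 1) := by
    refine ae_all_iff.2 fun k => ?_
    filter_upwards [condExp_monomial i k, condExp_smul (μ := cube n) ((-1 : ℝ) ^ ((k : ℕ) + 1))
      (fun x : Fin n → ℝ => ∏ j ∈ Finset.Iic k, x j)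
      (MeasurableSpace.comap (fun x => x i) inferInstance)] with x h1 h2
    rw [h2, Pi.smul_apply, h1, smul_eq_mul]
  rw [he]
  filter_upwards [hsum, hterm] with x h1 h2
  rw [h1, Finset.sum_apply, Finset.sum_congr rfl fun k _ => h2 k, Finset.sum_mul,
    ← Finset.sum_add_distrib]
  refine Finset.sum_congr rfl fun k _ => ?_
  split_ifs <;> ring

lemma sum_slope {n : ℕ} (i : Fin n) :
    (∑ k : Fin n, if i ≤ k then (-1 : ℝ) ^ ((k : ℕ) + 1) * (1 / 2) ^ (k : ℕ) else 0)
      = 4 / 3 * ((-(1 / 2)) ^ ((i : ℕ) + 1) - (-(1 / 2)) ^ (n + 1)) := by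
  have key (a m : ℕ) (h : a ≤ m) :
      (∑ k ∈ Finset.range m, if a ≤ k then (-1 : ℝ) ^ (k + 1) * (1 / 2) ^ k else 0)
        = 4 / 3 * ((-(1 / 2)) ^ (a + 1) - (-(1 / 2)) ^ (m + 1)) := by
    induction m, h using Nat.le_induction with
    | base =>
      rw [Finset.sum_eq_zero]
      · ring
      · intro k hk
        rw [if_neg (by simpa using hk)]
    | succ m hm ih =>
      rw [Finset.sum_range_succ, ih, if_pos hm, neg_pow (1 / 2 : ℝ) (m + 1),
        neg_pow (1 / 2 : ℝ) (m + 1 + 1)]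
      ring
  rw [← key i n i.2.le, ← Fin.sum_univ_eq_sum_range
    (fun k => if (i : ℕ) ≤ k then (-1 : ℝ) ^ (k + 1) * (1 / 2) ^ k else 0)]
  rfl

lemma variance_condExp_kFun {n : ℕ} (i : Fin n) :
    variance ((cube n)[kFun n | MeasurableSpace.comap (fun x => x i) inferInstance]) (cube n)
      = 4 / 27 * ((-(1 / 2)) ^ ((i : ℕ) + 1) - (-(1 / 2)) ^ (n + 1)) ^ 2 := by
  obtain ⟨c, hc⟩ := condExp_kFun i
  rw [variance_congr hc, variance_const_add
    (continuous_const.mul (continuous_apply i)).aestronglyMeasurable, variance_const_mul,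
    variance_coord,
    sum_slope]
  ring

end KFunction

open MeasureTheory ProbabilityTheory Set

/-- Closed form for the main effect Sobol' indices of the K-function
`K(x) = ∑_{i=1}^n (−1)^i ∏_{j=1}^i x_j` with independent inputs uniform on `[0,1]`:
for each (1-based) input index `i`,
`S_i = Var(E[K | X_i])/Var(K)
     = [(1/2)^{2i−2} + (−1/2)^{n+i−2} + (1/2)^{2n}]
       / [3/2 − (3/5)(−1)^n (1/2)^{n−1} + (1/10)(1/3)^{n−3} − 3(1/2)^{2n}]`. -/
theorem main_effect_indices_K_function
    (n : ℕ) (hn : 1 ≤ n)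
    (μ : Measure (Fin n → ℝ))
    (hμ : μ = Measure.pi fun _ => volume.restrict (Icc (0 : ℝ) 1))
    (K : (Fin n → ℝ) → ℝ)
    (hK : K = fun x => ∑ i : Fin n, (-1 : ℝ) ^ ((i : ℕ) + 1) * ∏ j ∈ Finset.Iic i, x j) :
    ∀ i : Fin n,
      variance (μ[K | MeasurableSpace.comap (fun x => x i) inferInstance]) μ / variance K μ
        = ((1 / 2 : ℝ) ^ (2 * (((i : ℕ) : ℤ) + 1) - 2)
              + (-(1 / 2) : ℝ) ^ ((n : ℤ) + (((i : ℕ) : ℤ) + 1) - 2)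
              + (1 / 2 : ℝ) ^ (2 * (n : ℤ)))
            / (3 / 2 - (3 / 5) * (-1 : ℝ) ^ (n : ℤ) * (1 / 2 : ℝ) ^ ((n : ℤ) - 1)
              + (1 / 10) * (1 / 3 : ℝ) ^ ((n : ℤ) - 3)
              - 3 * (1 / 2 : ℝ) ^ (2 * (n : ℤ))) := by
  intro i
  have hK' : K = KFunction.kFun n := hK
  subst hK' hμ
  have h1 := KFunction.variance_condExp_kFun i
  have h2 := KFunction.variance_kFun n
  rw [h1, h2]
  -- Both variances are `1/27` of the corresponding closed form.
  rw [← mul_div_mul_left _ _ (show (27 : ℝ) ≠ 0 by norm_num)]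
  have hn3 : (1 / 3 : ℝ) ^ ((n : ℤ) - 3) = 27 * (1 / 3) ^ n := by
    rw [zpow_sub₀ (by norm_num), zpow_natCast]
    norm_num
    ring
  have hn1 : (-1 : ℝ) ^ (n : ℤ) * (1 / 2 : ℝ) ^ ((n : ℤ) - 1) = 2 * (-(1 / 2)) ^ n := by
    rw [zpow_sub₀ (by norm_num), zpow_natCast, zpow_natCast, neg_pow (1 / 2 : ℝ) n, zpow_one]
    ring
  have hsq (m : ℕ) : (1 / 2 : ℝ) ^ (2 * (m : ℤ)) = ((-(1 / 2)) ^ m) ^ 2 := by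
    rw [zpow_mul, zpow_natCast, ← pow_mul, mul_comm m 2, pow_mul]
    norm_num
  have hi : 2 * (((i : ℕ) : ℤ) + 1) - 2 = 2 * ((i : ℕ) : ℤ) := by ring
  have hni : (-(1 / 2) : ℝ) ^ ((n : ℤ) + (((i : ℕ) : ℤ) + 1) - 2)
      = -2 * ((-(1 / 2)) ^ n * (-(1 / 2)) ^ (i : ℕ)) := by
    rw [show (n : ℤ) + (((i : ℕ) : ℤ) + 1) - 2 = ((n + (i : ℕ) : ℕ) : ℤ) - 1 by push_cast; ring,
      zpow_sub₀ (by norm_num), zpow_natCast, zpow_one, pow_add]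
    ring
  rw [hi, hni, hsq, hsq, hn3, mul_assoc (3 / 5 : ℝ), hn1]
  congr 1 <;> ring
end
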